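/- Let H²_β be a weighted Hardy space of polynomial growth and let f₁, f₂ be analytic on an open neighborhood of the closed unit disk. Then M_{f₁} is similar to M_{f₂} on H²_β if and only if there exist two finite Blaschke products B₁ and B₂ of the same order and a function h analytic on an open neighborhood of the closed unit disk such that f₁ = h ∘ B₁ and f₂ = h ∘ B₂. -/

import Mathlib

noncomputable section

open Complex Filter Topology

/-- The sequence-space (ℓ²) model of a weighted Hardy space `H²_β`.
An element `a : H2` represents the analytic function whose `k`-th Taylor
coefficient is `a k / β k` (so that `‖a‖` is exactly the `H²_β`-norm). -/
abbrev H2 : Type := lp (fun _ : ℕ => ℂ) 2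

/-- The direct sum (ℓ²-sense) of `m` copies of `H2`. -/
abbrev Hm (m : ℕ) : Type := PiLp 2 (fun _ : Fin m => H2)

/-- The open unit disk 𝔻 ⊆ ℂ. -/
def unitDisk : Set ℂ := Metric.ball 0 1

/-- `β_0 = 1` and `β_k = ∏_{j=1}^k w_j`. -/
def betaSeq (w : ℕ → ℝ) (k : ℕ) : ℝ := ∏ j ∈ Finset.Icc 1 k, w j

/-- The analytic function on 𝔻 represented by the vector `a` in the model of `H²_β`:
`f(z) = ∑_k (a k / β k) z^k`. -/
def repFun (β : ℕ → ℝ) (a : H2) (z : ℂ) : ℂ := ∑' k, (a k / (β k : ℂ)) * z ^ k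

/-- `T` is (the ℓ²-model of) the multiplication operator `M_g` on `H²_β`.
Existence of such a `T` says precisely that `M_g` is bounded on `H²_β`. -/
def RepMul (β : ℕ → ℝ) (g : ℂ → ℂ) (T : H2 →L[ℂ] H2) : Prop :=
  ∀ a : H2, ∀ z ∈ unitDisk, repFun β (T a) z = g z * repFun β a z

/-- `T` is (the ℓ²-model of) the composition operator `C_ψ` on `H²_β`.
Existence of such a `T` says precisely that `C_ψ` is bounded on `H²_β`. -/
def RepComp (β : ℕ → ℝ) (ψ : ℂ → ℂ) (T : H2 →L[ℂ] H2) : Prop :=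
  ∀ a : H2, ∀ z ∈ unitDisk, repFun β (T a) z = repFun β a (ψ z)

/-- The Möbius factor `φ_{z₀}(z) = (z₀ - z)/(1 - conj z₀ · z)`. -/
def mobius (z₀ z : ℂ) : ℂ := (z₀ - z) / (1 - (starRingEnd ℂ) z₀ * z)

/-- `φ` belongs to `Aut(𝔻)`, i.e. `φ(z) = e^{iθ}(z₀ - z)/(1 - conj z₀ · z)`. -/
def IsDiskAut (φ : ℂ → ℂ) : Prop :=
  ∃ (θ : ℝ) (z₀ : ℂ), z₀ ∈ unitDisk ∧
    ∀ z, φ z = Complex.exp (θ * Complex.I) * mobius z₀ z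

/-- `B` is a finite Blaschke product of order `m`. -/
def IsBlaschke (m : ℕ) (B : ℂ → ℂ) : Prop :=
  ∃ (θ : ℝ) (zs : Fin m → ℂ), (∀ j, zs j ∈ unitDisk) ∧
    ∀ z, B z = Complex.exp (θ * Complex.I) * ∏ j, mobius (zs j) z

/-- `w` is a positive weight sequence tending to `1` such that the weighted Hardy
space `H²_β` is of polynomial growth: `sup_k (k+1)|w_k - 1| < ∞`. -/
def PolyGrowth (w : ℕ → ℝ) : Prop :=
  (∀ k, 1 ≤ k → 0 < w k) ∧ Tendsto w atTop (nhds 1) ∧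
    ∃ M : ℝ, ∀ k : ℕ, 1 ≤ k → ((k : ℝ) + 1) * |w k - 1| ≤ M

/-- `f` is analytic on an open neighbourhood of the closed unit disk. -/
def AnalyticOnClosedDisk (f : ℂ → ℂ) : Prop :=
  ∃ U : Set ℂ, IsOpen U ∧ Metric.closedBall (0:ℂ) 1 ⊆ U ∧ AnalyticOnNhd ℂ f U

/-! ### Basic facts on the sequence model -/

structure Good (β : ℕ → ℝ) : Prop where
  pos : ∀ k, 0 < β k
  smul : ∀ r : ℝ, 0 < r → r < 1 → Summable fun k => r ^ k * β k
  sdiv : ∀ r : ℝ, 0 < r → r < 1 → Summable fun k => r ^ k / β k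
  bdd : ∃ C : ℝ, ∀ k, β (k + 1) ≤ C * β k

theorem betaSeq_succ (w : ℕ → ℝ) (k : ℕ) : betaSeq w (k + 1) = betaSeq w k * w (k + 1) := by
  unfold betaSeq
  rw [Finset.prod_Icc_succ_top (by omega)]

theorem betaSeq_pos {w : ℕ → ℝ} (hw : PolyGrowth w) (k : ℕ) : 0 < betaSeq w k :=
  Finset.prod_pos fun j hj => hw.1 j (Finset.mem_Icc.1 hj).1

theorem good_betaSeq {w : ℕ → ℝ} (hw : PolyGrowth w) : Good (betaSeq w) := by
  have hp := betaSeq_pos hw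
  have hw1 : Tendsto (fun n => w (n + 1)) atTop (𝓝 1) := (tendsto_add_atTop_iff_nat 1).2 hw.2.1
  refine ⟨hp, ?_, ?_, ?_⟩
  · intro r hr hr1
    refine summable_of_ratio_test_tendsto_lt_one hr1
      (Eventually.of_forall fun n => (mul_pos (pow_pos hr n) (hp n)).ne') ?_
    have : Tendsto (fun n => r * w (n + 1)) atTop (𝓝 (r * 1)) := hw1.const_mul r
    rw [mul_one] at this
    refine this.congr fun n => ?_
    rw [Real.norm_of_nonneg (mul_pos (pow_pos hr _) (hp _)).le,
      Real.norm_of_nonneg (mul_pos (pow_pos hr _) (hp _)).le, betaSeq_succ, pow_succ]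
    have := (hp n).ne'
    field_simp
  · intro r hr hr1
    refine summable_of_ratio_test_tendsto_lt_one hr1
      (Eventually.of_forall fun n => (div_pos (pow_pos hr n) (hp n)).ne') ?_
    have : Tendsto (fun n => r / w (n + 1)) atTop (𝓝 (r / 1)) := by
      apply Tendsto.div tendsto_const_nhds hw1 one_ne_zero
    rw [div_one] at this
    refine this.congr fun n => ?_
    rw [Real.norm_of_nonneg (div_pos (pow_pos hr _) (hp _)).le,
      Real.norm_of_nonneg (div_pos (pow_pos hr _) (hp _)).le, betaSeq_succ, pow_succ]
    have := (hp n).ne'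
    have := (hw.1 (n+1) (by omega)).ne'
    field_simp
  · obtain ⟨C, hC⟩ := hw1.bddAbove_range
    refine ⟨C, fun k => ?_⟩
    rw [betaSeq_succ, mul_comm]
    exact mul_le_mul_of_nonneg_right (hC ⟨k, rfl⟩) (hp k).le

theorem good_one : Good (fun _ => (1 : ℝ)) := by
  refine ⟨fun _ => one_pos, ?_, ?_, 1, by simp⟩ <;> intro r hr hr1 <;>
    simpa using summable_geometric_of_lt_one hr.le hr1

theorem memlp_of_sq {f : ℕ → ℂ} (h : Summable fun i => ‖f i‖ ^ 2) :
    Memℓp f 2 := by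
  apply memℓp_gen
  simpa using h

theorem memlp_of_summable {f : ℕ → ℂ} (h : Summable fun i => ‖f i‖) :
    Memℓp f 2 := by
  have : Memℓp f 1 := by
    apply memℓp_gen
    simpa using h
  exact this.of_exponent_ge (by norm_num)

def mkv (c : ℕ → ℂ) (h : Summable fun k => ‖c k‖) : H2 := ⟨c, memlp_of_summable h⟩

@[simp] theorem mkv_apply (c : ℕ → ℂ) (h : Summable fun k => ‖c k‖) (k : ℕ) : mkv c h k = c k := rfl

theorem h2_norm_sq (a : H2) : HasSum (fun k => ‖a k‖ ^ 2) (‖a‖ ^ 2) := by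
  have := lp.hasSum_norm (p := 2) (by norm_num) a
  simpa using this

theorem h2_sum_le (a : H2) (s : Finset ℕ) : ∑ k ∈ s, ‖a k‖ ^ 2 ≤ ‖a‖ ^ 2 :=
  sum_le_hasSum s (fun _ _ => by positivity) (h2_norm_sq a)

theorem h2_norm_le (a : H2) {C : ℝ} (hC : 0 ≤ C) (h : ∀ s : Finset ℕ, ∑ k ∈ s, ‖a k‖ ^ 2 ≤ C ^ 2) :
    ‖a‖ ≤ C := by
  apply lp.norm_le_of_forall_sum_le (p := 2) (by norm_num) hC
  simpa using h

/-- Build a bounded operator on `H2` from a linear formula. -/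
theorem exists_clm (A : H2 → ℕ → ℂ) (hadd : ∀ x y n, A (x + y) n = A x n + A y n)
    (hsmul : ∀ (c : ℂ) x n, A (c • x) n = c * A x n) (C : ℝ) (hC : 0 ≤ C)
    (hb : ∀ x s, ∑ n ∈ s, ‖A x n‖ ^ 2 ≤ (C * ‖x‖) ^ 2) :
    ∃ T : H2 →L[ℂ] H2, ∀ x n, T x n = A x n := by
  have hm : ∀ x, Memℓp (A x) 2 := fun x => by
    apply memℓp_gen' (C := (C * ‖x‖) ^ 2)
    intro s
    simpa using hb x s
  let L : H2 →ₗ[ℂ] H2 :=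
    { toFun := fun x => ⟨A x, hm x⟩
      map_add' := fun x y => by
        ext n; exact hadd x y n
      map_smul' := fun c x => by
        ext n; exact hsmul c x n }
  refine ⟨L.mkContinuous C fun x => ?_, fun x n => rfl⟩
  exact h2_norm_le _ (by positivity) (hb x)

theorem clm_ext_single {F : Type*} [NormedAddCommGroup F] [NormedSpace ℂ F] {L₁ L₂ : H2 →L[ℂ] F}
    (h : ∀ k, L₁ (lp.single 2 k (1 : ℂ)) = L₂ (lp.single 2 k (1 : ℂ))) : L₁ = L₂ := by
  ext a
  have ha := lp.hasSum_single (p := 2) (E := fun _ : ℕ => ℂ) (by norm_num) a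
  have e : ∀ k, lp.single (E := fun _ : ℕ => ℂ) 2 k (a k) = a k • lp.single 2 k (1 : ℂ) := by
    intro k
    rw [← lp.single_smul]; simp
  have h1 := ha.mapL L₁
  have h2 := ha.mapL L₂
  refine h1.unique ?_
  convert h2 using 2 with k
  rw [e, map_smul, map_smul, h]

/-! ### Evaluation -/

theorem mem_unitDisk {z : ℂ} : z ∈ unitDisk ↔ ‖z‖ < 1 := by simp [unitDisk]

theorem Good.sdiv' {β : ℕ → ℝ} (hβ : Good β) {r : ℝ} (h0 : 0 ≤ r) (h1 : r < 1) :
    Summable fun k => r ^ k / β k := by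
  refine Summable.of_nonneg_of_le (fun k => div_nonneg (pow_nonneg h0 k) (hβ.pos k).le) (fun k => ?_)
    (hβ.sdiv ((r + 1) / 2) (by linarith) (by linarith))
  have := (hβ.pos k).le
  gcongr
  linarith

theorem Good.smul' {β : ℕ → ℝ} (hβ : Good β) {r : ℝ} (h0 : 0 ≤ r) (h1 : r < 1) :
    Summable fun k => r ^ k * β k := by
  refine Summable.of_nonneg_of_le (fun k => mul_nonneg (pow_nonneg h0 k) (hβ.pos k).le) (fun k => ?_)
    (hβ.smul ((r + 1) / 2) (by linarith) (by linarith))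
  have := (hβ.pos k).le
  gcongr
  linarith

theorem kerv_summable {β : ℕ → ℝ} (hβ : Good β) {z : ℂ} (hz : z ∈ unitDisk) :
    Summable fun k => ‖(starRingEnd ℂ) z ^ k / (β k : ℂ)‖ := by
  have := hβ.sdiv' (norm_nonneg z) (mem_unitDisk.1 hz)
  refine this.congr fun k => ?_
  simp [abs_of_pos (hβ.pos k)]

/-- reproducing kernel vector -/
def kerv {β : ℕ → ℝ} (hβ : Good β) {z : ℂ} (hz : z ∈ unitDisk) : H2 :=
  mkv _ (kerv_summable hβ hz)

theorem hasSum_repFun {β : ℕ → ℝ} (hβ : Good β) {z : ℂ} (hz : z ∈ unitDisk) (a : H2) :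
    HasSum (fun k => (a k / (β k : ℂ)) * z ^ k) (inner ℂ (kerv hβ hz) a) := by
  refine (lp.hasSum_inner (𝕜 := ℂ) (kerv hβ hz) a).congr_fun ?_
  intro k
  simp [kerv, RCLike.inner_apply]
  ring

theorem repFun_eq {β : ℕ → ℝ} (hβ : Good β) {z : ℂ} (hz : z ∈ unitDisk) (a : H2) :
    repFun β a z = inner ℂ (kerv hβ hz) a := (hasSum_repFun hβ hz a).tsum_eq

/-- evaluation functional -/
def ev {β : ℕ → ℝ} (hβ : Good β) {z : ℂ} (hz : z ∈ unitDisk) : H2 →L[ℂ] ℂ := innerSL ℂ (kerv hβ hz)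

theorem ev_apply {β : ℕ → ℝ} (hβ : Good β) {z : ℂ} (hz : z ∈ unitDisk) (a : H2) :
    ev hβ hz a = repFun β a z := by
  rw [repFun_eq hβ hz]; rfl

theorem mem_eball_one {z : ℂ} : z ∈ Metric.eball (0:ℂ) 1 ↔ z ∈ unitDisk := by
  rw [Metric.mem_eball, edist_zero_right, ← ofReal_norm, ENNReal.ofReal_lt_one, mem_unitDisk]

theorem hasFPS_repFun {β : ℕ → ℝ} (hβ : Good β) (a : H2) :
    HasFPowerSeriesOnBall (repFun β a)
      (FormalMultilinearSeries.ofScalars ℂ (fun k => a k / (β k : ℂ))) 0 1 := by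
  refine ⟨?_, by norm_num, ?_⟩
  · apply ENNReal.le_of_forall_nnreal_lt
    intro r hr
    have hr : (r : ℝ) < 1 := by exact_mod_cast hr
    apply FormalMultilinearSeries.le_radius_of_summable_norm
    have hz : (r : ℂ) ∈ unitDisk := by
      rw [mem_unitDisk]; simpa using hr
    have := (hasSum_repFun hβ hz a).summable.norm
    refine this.congr fun k => ?_
    rw [FormalMultilinearSeries.ofScalars_norm]
    simp
  · intro y hy
    have hy : y ∈ unitDisk := mem_eball_one.1 hy
    have := (hasSum_repFun hβ hy a)
    rw [← repFun_eq] at this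
    rw [zero_add]
    refine this.congr_fun fun k => ?_
    simp [mul_comm]

theorem repFun_diff {β : ℕ → ℝ} (hβ : Good β) (a : H2) : DifferentiableOn ℂ (repFun β a) unitDisk := by
  have := (hasFPS_repFun hβ a).differentiableOn
  refine this.mono ?_
  exact fun z hz => mem_eball_one.2 hz

theorem unitDisk_open : IsOpen unitDisk := Metric.isOpen_ball

theorem repFun_inj {β : ℕ → ℝ} (hβ : Good β) {a b : H2}
    (h : ∀ z ∈ unitDisk, repFun β a z = repFun β b z) : a = b := by
  have h1 := (hasFPS_repFun hβ a).hasFPowerSeriesAt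
  have h2 := (hasFPS_repFun hβ b).hasFPowerSeriesAt
  have : repFun β b =ᶠ[𝓝 0] repFun β a := by
    filter_upwards [unitDisk_open.mem_nhds (by simp [unitDisk] : (0:ℂ) ∈ unitDisk)] with z hz
    exact (h z hz).symm
  have e := h1.eq_formalMultilinearSeries (h2.congr this)
  have e2 := (FormalMultilinearSeries.ofScalars_series_injective ℂ ℂ) e
  ext k
  have := congrFun e2 k
  have hk : (β k : ℂ) ≠ 0 := by exact_mod_cast (hβ.pos k).ne'
  field_simp at this
  exact this

theorem repFun_add {β : ℕ → ℝ} (hβ : Good β) {z : ℂ} (hz : z ∈ unitDisk) (a b : H2) :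
    repFun β (a + b) z = repFun β a z + repFun β b z := by
  simp only [← ev_apply hβ hz, map_add]

theorem repFun_smul {β : ℕ → ℝ} (hβ : Good β) {z : ℂ} (hz : z ∈ unitDisk) (c : ℂ) (b : H2) :
    repFun β (c • b) z = c * repFun β b z := by
  simp only [← ev_apply hβ hz, map_smul, smul_eq_mul]

/-! ### Functions analytic on the closed disk -/

theorem AnalyticOnClosedDisk.exists_radius {f : ℂ → ℂ} (hf : AnalyticOnClosedDisk f) :
    ∃ R : ℝ, 1 < R ∧ AnalyticOnNhd ℂ f (Metric.closedBall 0 R) := by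
  obtain ⟨U, hU, hsub, hfU⟩ := hf
  obtain ⟨δ, hδ, h⟩ := (isCompact_closedBall (0:ℂ) 1).exists_cthickening_subset_open hU hsub
  refine ⟨1 + δ, by linarith, fun z hz => hfU z (h ?_)⟩
  rw [cthickening_closedBall hδ.le (by norm_num)]
  rwa [add_comm]

/-- Taylor coefficient at zero -/
def tc (u : ℂ → ℂ) (n : ℕ) : ℂ := (n.factorial : ℂ)⁻¹ * iteratedDeriv n u 0

theorem tc_hasSum {u : ℂ → ℂ} {R : ℝ} (hu : DifferentiableOn ℂ u (Metric.ball 0 R))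
    {z : ℂ} (hz : ‖z‖ < R) : HasSum (fun n => tc u n * z ^ n) (u z) := by
  have := Complex.hasSum_taylorSeries_on_ball (f := u) (c := 0) (r := R) hu (z := z) (by simpa using hz)
  refine this.congr_fun fun n => ?_
  simp [tc]; ring

theorem tc_bound {u : ℂ → ℂ} {R C : ℝ} (hR : 0 < R) (hu : DifferentiableOn ℂ u (Metric.closedBall 0 R))
    (hC : ∀ z, ‖z‖ = R → ‖u z‖ ≤ C) (n : ℕ) : ‖tc u n‖ ≤ C / R ^ n := by
  have := Complex.norm_iteratedDeriv_le_of_forall_mem_sphere_norm_le (f := u) (c := 0) (R := R) (C := C) n hR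
    (hu.diffContOnCl_ball (U := Metric.closedBall 0 R) (le_refl _)) (fun z hz => hC z (by simpa using hz))
  rw [tc, norm_mul, norm_inv, Complex.norm_natCast]
  have h : (0:ℝ) < n.factorial := by exact_mod_cast n.factorial_pos
  rw [inv_mul_le_iff₀ h]
  calc _ ≤ _ := this
    _ = _ := by ring

theorem AnalyticOnClosedDisk.tc_decay {u : ℂ → ℂ} (hu : AnalyticOnClosedDisk u) :
    ∃ C r : ℝ, 0 < r ∧ r < 1 ∧ (∀ n, ‖tc u n‖ ≤ C * r ^ n) := by
  obtain ⟨R, hR, hA⟩ := hu.exists_radius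
  obtain ⟨C, hC⟩ := (isCompact_sphere (0:ℂ) R).exists_bound_of_continuousOn
    (hA.continuousOn.mono Metric.sphere_subset_closedBall)
  refine ⟨C, R⁻¹, by positivity, inv_lt_one_of_one_lt₀ hR, fun n => ?_⟩
  have := tc_bound (by linarith) hA.differentiableOn (fun z hz => hC z (by simpa using hz)) n
  rwa [inv_pow, ← div_eq_mul_inv]

theorem AnalyticOnClosedDisk.diffOn {u : ℂ → ℂ} (hu : AnalyticOnClosedDisk u) :
    DifferentiableOn ℂ u unitDisk := by
  obtain ⟨R, hR, hA⟩ := hu.exists_radius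
  exact hA.differentiableOn.mono (Metric.ball_subset_closedBall.trans
    (Metric.closedBall_subset_closedBall hR.le))

theorem AnalyticOnClosedDisk.summable {u : ℂ → ℂ} (hu : AnalyticOnClosedDisk u) {β : ℕ → ℝ} (hβ : Good β) :
    Summable fun k => ‖tc u k * (β k : ℂ)‖ := by
  obtain ⟨C, r, h0, h1, h⟩ := hu.tc_decay
  refine Summable.of_nonneg_of_le (fun k => norm_nonneg _) (fun k => ?_) ((hβ.smul r h0 h1).mul_left C)
  rw [norm_mul, Complex.norm_real, Real.norm_of_nonneg (hβ.pos k).le, ← mul_assoc]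
  exact mul_le_mul_of_nonneg_right (h k) (hβ.pos k).le

/-- the vector representing a function analytic on the closed disk -/
def ofFun {u : ℂ → ℂ} (hu : AnalyticOnClosedDisk u) {β : ℕ → ℝ} (hβ : Good β) : H2 :=
  mkv _ (hu.summable hβ)

theorem repFun_ofFun {u : ℂ → ℂ} (hu : AnalyticOnClosedDisk u) {β : ℕ → ℝ} (hβ : Good β)
    {z : ℂ} (hz : z ∈ unitDisk) : repFun β (ofFun hu hβ) z = u z := by
  have h1 := tc_hasSum hu.diffOn (mem_unitDisk.1 hz)
  rw [← h1.tsum_eq]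
  unfold repFun
  congr 1
  ext k
  have hk : (β k : ℂ) ≠ 0 := by exact_mod_cast (hβ.pos k).ne'
  simp [ofFun, hk]

theorem exists_ofFun {u : ℂ → ℂ} (hu : AnalyticOnClosedDisk u) {β : ℕ → ℝ} (hβ : Good β) :
    ∃ a : H2, ∀ z ∈ unitDisk, repFun β a z = u z := ⟨ofFun hu hβ, fun _ hz => repFun_ofFun hu hβ hz⟩

theorem analyticOnClosedDisk_of_diff {u : ℂ → ℂ} {R : ℝ} (hR : 1 < R)
    (h : DifferentiableOn ℂ u (Metric.ball 0 R)) : AnalyticOnClosedDisk u :=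
  ⟨Metric.ball 0 R, Metric.isOpen_ball, Metric.closedBall_subset_ball hR,
    h.analyticOnNhd Metric.isOpen_ball⟩

/-! ### Multiplication by `z` -/

theorem exists_shift {β : ℕ → ℝ} (hβ : Good β) :
    ∃ S : H2 →L[ℂ] H2, ∀ a, ∀ z ∈ unitDisk, repFun β (S a) z = z * repFun β a z := by
  obtain ⟨C, hC⟩ := hβ.bdd
  have hC0 : 0 ≤ C := by
    by_contra h
    have := hC 0
    have h1 := hβ.pos 0
    have h2 := hβ.pos 1
    simp at this
    nlinarith
  obtain ⟨S, hS⟩ := exists_clm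
    (fun a n => match n with
      | 0 => 0
      | k + 1 => a k * ((β (k + 1) / β k : ℝ) : ℂ))
    (by intro x y n; cases n <;> simp [add_mul])
    (by intro c x n; cases n <;> simp [mul_assoc]) C hC0 (by
      intro x s
      have hsub : s ⊆ Finset.range (s.sup id + 1 + 1) := by
        intro n hn
        have := Finset.le_sup (f := id) hn
        simp at this ⊢; omega
      refine (Finset.sum_le_sum_of_subset_of_nonneg hsub (fun _ _ _ => by positivity)).trans ?_
      rw [Finset.sum_range_succ']
      simp only [norm_zero]
      have : ∀ k ∈ Finset.range (s.sup id + 1), ‖x k * ((β (k + 1) / β k : ℝ) : ℂ)‖ ^ 2 ≤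
          C ^ 2 * ‖x k‖ ^ 2 := by
        intro k _
        rw [norm_mul, Complex.norm_real, Real.norm_of_nonneg (div_pos (hβ.pos _) (hβ.pos _)).le, mul_pow,
          mul_comm]
        have h1 : β (k+1) / β k ≤ C := by
          rw [div_le_iff₀ (hβ.pos k)]; exact hC k
        have h2 : 0 ≤ β (k+1) / β k := (div_pos (hβ.pos _) (hβ.pos _)).le
        gcongr
      have h3 := Finset.sum_le_sum this
      rw [← Finset.mul_sum] at h3
      have h4 := h2_sum_le x (Finset.range (s.sup id + 1))
      rw [mul_pow]
      nlinarith [sq_nonneg C])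
  refine ⟨S, fun a z hz => ?_⟩
  have h1 := hasSum_repFun hβ hz a
  rw [← repFun_eq] at h1
  have h2 := hasSum_repFun hβ hz (S a)
  rw [← repFun_eq] at h2
  refine h2.unique ?_
  rw [← hasSum_nat_add_iff' 1]
  simp only [Finset.range_one, Finset.sum_singleton, hS, zero_div, zero_mul, sub_zero]
  refine (h1.mul_left z).congr_fun fun k => ?_
  have hk : (β k : ℂ) ≠ 0 := by exact_mod_cast (hβ.pos k).ne'
  have hk' : (β (k+1) : ℂ) ≠ 0 := by exact_mod_cast (hβ.pos (k+1)).ne'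
  push_cast
  field_simp
  ring
/-! ### Möbius maps and Schwarz lemma -/

theorem mobius_den_ne {a z : ℂ} (h : ‖a‖ * ‖z‖ < 1) : 1 - (starRingEnd ℂ) a * z ≠ 0 := by
  intro h0
  have : (starRingEnd ℂ) a * z = 1 := (sub_eq_zero.1 h0).symm
  have h2 := congrArg norm this
  rw [norm_mul, RCLike.norm_conj, norm_one] at h2
  linarith

theorem den_ne_disk {a z : ℂ} (ha : a ∈ unitDisk) (hz : z ∈ unitDisk) :
    1 - (starRingEnd ℂ) a * z ≠ 0 := by
  apply mobius_den_ne
  rw [mem_unitDisk] at ha hz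
  nlinarith [norm_nonneg a, norm_nonneg z]

theorem mobius_identity {a z : ℂ} (h : 1 - (starRingEnd ℂ) a * z ≠ 0) :
    1 - ‖mobius a z‖ ^ 2 = (1 - ‖a‖ ^ 2) * (1 - ‖z‖ ^ 2) / ‖1 - (starRingEnd ℂ) a * z‖ ^ 2 := by
  have h1 : ‖1 - (starRingEnd ℂ) a * z‖ ^ 2 ≠ 0 := by
    simpa using h
  rw [mobius, norm_div, div_pow, eq_div_iff h1, sub_mul, div_mul_cancel₀ _ h1]
  simp only [← Complex.normSq_eq_norm_sq, Complex.normSq_apply]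
  simp
  ring

theorem mobius_norm_lt {a z : ℂ} (ha : a ∈ unitDisk) (hz : z ∈ unitDisk) : ‖mobius a z‖ < 1 := by
  have h := den_ne_disk ha hz
  have h1 := mobius_identity h
  rw [mem_unitDisk] at ha hz
  have h2 : 0 < (1 - ‖a‖ ^ 2) * (1 - ‖z‖ ^ 2) / ‖1 - (starRingEnd ℂ) a * z‖ ^ 2 := by
    have : 0 < ‖1 - (starRingEnd ℂ) a * z‖ := norm_pos_iff.2 h
    have : 0 < 1 - ‖a‖ ^ 2 := by nlinarith [norm_nonneg a]
    have : 0 < 1 - ‖z‖ ^ 2 := by nlinarith [norm_nonneg z]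
    positivity
  by_contra hc
  push Not at hc
  nlinarith

theorem mobius_mem {a z : ℂ} (ha : a ∈ unitDisk) (hz : z ∈ unitDisk) : mobius a z ∈ unitDisk :=
  mem_unitDisk.2 (mobius_norm_lt ha hz)

theorem mobius_norm_one {a z : ℂ} (ha : a ∈ unitDisk) (hz : ‖z‖ = 1) : ‖mobius a z‖ = 1 := by
  rw [mem_unitDisk] at ha
  have h : 1 - (starRingEnd ℂ) a * z ≠ 0 := mobius_den_ne (by rw [hz]; linarith)
  have h1 := mobius_identity h
  rw [hz] at h1
  simp at h1
  nlinarith [norm_nonneg (mobius a z)]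

theorem mobius_norm_gt {a z : ℂ} (ha : a ∈ unitDisk) (hz : 1 < ‖z‖) (h : 1 - (starRingEnd ℂ) a * z ≠ 0) :
    1 < ‖mobius a z‖ := by
  have h1 := mobius_identity h
  rw [mem_unitDisk] at ha
  have h2 : 0 < (1 - ‖a‖ ^ 2) * (‖z‖ ^ 2 - 1) / ‖1 - (starRingEnd ℂ) a * z‖ ^ 2 := by
    have : 0 < ‖1 - (starRingEnd ℂ) a * z‖ := norm_pos_iff.2 h
    have : 0 < 1 - ‖a‖ ^ 2 := by nlinarith [norm_nonneg a]
    have : 0 < ‖z‖ ^ 2 - 1 := by nlinarith [norm_nonneg z]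
    positivity
  have h3 : ‖mobius a z‖ ^ 2 - 1 = (1 - ‖a‖ ^ 2) * (‖z‖ ^ 2 - 1) / ‖1 - (starRingEnd ℂ) a * z‖ ^ 2 := by
    linear_combination -h1
  by_contra hc
  push Not at hc
  nlinarith [norm_nonneg (mobius a z)]

theorem mobius_norm_comm (a z : ℂ) : ‖mobius a z‖ = ‖mobius z a‖ := by
  rw [mobius, mobius, norm_div, norm_div, norm_sub_rev]
  congr 1
  rw [← RCLike.norm_conj]
  simp [mul_comm]

@[simp] theorem mobius_self (a : ℂ) : mobius a a = 0 := by simp [mobius]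

theorem mobius_eq_zero {a z : ℂ} (ha : a ∈ unitDisk) (hz : z ∈ unitDisk) : mobius a z = 0 ↔ z = a := by
  rw [mobius, div_eq_zero_iff]
  simp only [den_ne_disk ha hz, or_false, sub_eq_zero]
  exact eq_comm

theorem mobius_diff {a : ℂ} {s : Set ℂ} (h : ∀ z ∈ s, ‖a‖ * ‖z‖ < 1) : DifferentiableOn ℂ (mobius a) s := by
  unfold mobius
  refine DifferentiableOn.div (by fun_prop) (by fun_prop) fun z hz => mobius_den_ne (h z hz)

theorem mul_lt_one_disk {a z : ℂ} (ha : a ∈ unitDisk) (hz : z ∈ unitDisk) : ‖a‖ * ‖z‖ < 1 := by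
  rw [mem_unitDisk] at ha hz
  nlinarith [norm_nonneg a, norm_nonneg z]

theorem mobius_diff_disk {a : ℂ} (ha : a ∈ unitDisk) : DifferentiableOn ℂ (mobius a) unitDisk :=
  mobius_diff fun _ hz => mul_lt_one_disk ha hz

theorem mobius_analytic {a : ℂ} (ha : a ∈ unitDisk) : AnalyticOnClosedDisk (mobius a) := by
  rw [mem_unitDisk] at ha
  refine analyticOnClosedDisk_of_diff (R := 2 / (1 + ‖a‖)) ?_ (mobius_diff fun z hz => ?_)
  · rw [lt_div_iff₀ (by positivity)]; linarith
  · have hz : ‖z‖ < 2 / (1 + ‖a‖) := by simpa using hz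
    rw [lt_div_iff₀ (by positivity)] at hz
    by_contra hc
    push Not at hc
    have h0 := norm_nonneg z
    nlinarith [norm_nonneg a]

theorem mobius_invol {a z : ℂ} (ha : a ∈ unitDisk) (hz : z ∈ unitDisk) : mobius a (mobius a z) = z := by
  have h1 := den_ne_disk ha hz
  have h2 := den_ne_disk ha ha
  have h3 := den_ne_disk ha (mobius_mem ha hz)
  rw [mobius, div_eq_iff h3]
  rw [mobius]
  have e : (a - z) / (1 - (starRingEnd ℂ) a * z) * (1 - (starRingEnd ℂ) a * z) = a - z :=
    div_mul_cancel₀ _ h1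
  apply mul_right_cancel₀ h1
  linear_combination (-1 + (starRingEnd ℂ) a * z) * e

theorem schwarz_one {F : ℂ → ℂ} (hF : DifferentiableOn ℂ F unitDisk) (hb : ∀ z ∈ unitDisk, ‖F z‖ ≤ 1)
    {s : ℂ} (hs : s ∈ unitDisk) (h0 : F s = 0) :
    ∃ G : ℂ → ℂ, DifferentiableOn ℂ G unitDisk ∧ (∀ z ∈ unitDisk, ‖G z‖ ≤ 1) ∧
      ∀ z ∈ unitDisk, F z = mobius s z * G z := by
  let G : ℂ → ℂ := fun z => - (1 - (starRingEnd ℂ) s * z) * dslope F s z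
  have hG : DifferentiableOn ℂ G unitDisk := by
    refine DifferentiableOn.mul (by fun_prop) ?_
    exact (Complex.differentiableOn_dslope (unitDisk_open.mem_nhds hs)).2 hF
  have hfac : ∀ z ∈ unitDisk, F z = mobius s z * G z := by
    intro z hz
    by_cases hzs : z = s
    · subst hzs; simp [h0]
    · have h1 := den_ne_disk hs hz
      have h2 : z - s ≠ 0 := sub_ne_zero.2 hzs
      simp only [G, mobius, dslope_of_ne F hzs, slope_def_field, h0]
      generalize 1 - (starRingEnd ℂ) s * z = D at h1
      have : s - z ≠ 0 := sub_ne_zero.2 (Ne.symm hzs)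
      field_simp
      ring
  refine ⟨G, hG, ?_, hfac⟩
  have key : ∀ z ∈ unitDisk, ‖F z‖ ≤ ‖mobius s z‖ := by
    intro z hz
    have hd : DifferentiableOn ℂ (fun z => F (mobius s z)) (Metric.ball 0 1) :=
      hF.comp (mobius_diff_disk hs) fun z hz => mobius_mem hs hz
    have hm : Set.MapsTo (fun z => F (mobius s z)) (Metric.ball 0 1)
        (Metric.closedBall ((fun z => F (mobius s z)) 0) 1) := by
      intro z hz
      have : mobius s 0 = s := by simp [mobius]
      simp only [this, h0]
      simpa using hb _ (mobius_mem hs hz)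
    have := Complex.dist_le_div_mul_dist_of_mapsTo_ball hd hm (z := mobius s z) (mobius_mem hs hz)
    have h1 : mobius s 0 = s := by simp [mobius]
    simpa [h1, h0, mobius_invol hs hz] using this
  have hne : ∀ z ∈ unitDisk, z ≠ s → ‖G z‖ ≤ 1 := by
    intro z hz hzs
    have h1 := key z hz
    rw [hfac z hz, norm_mul] at h1
    have h2 : 0 < ‖mobius s z‖ := norm_pos_iff.2 (mt (mobius_eq_zero hs hz).1 hzs)
    by_contra hc
    push Not at hc
    nlinarith
  intro z hz
  by_cases hzs : z = s
  · subst hzs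
    have hc : Tendsto (fun x => ‖G x‖) (𝓝[≠] z) (𝓝 ‖G z‖) :=
      ((hG.continuousOn.continuousAt (unitDisk_open.mem_nhds hz)).norm).tendsto.mono_left nhdsWithin_le_nhds
    refine le_of_tendsto hc ?_
    filter_upwards [self_mem_nhdsWithin, nhdsWithin_le_nhds (unitDisk_open.mem_nhds hz)] with x hx hx2
    exact hne x hx2 hx
  · exact hne z hz hzs

theorem schwarz_prod (S : Finset ℂ) : ∀ {F : ℂ → ℂ} (_ : DifferentiableOn ℂ F unitDisk)
    (_ : ∀ z ∈ unitDisk, ‖F z‖ ≤ 1) (_ : ∀ s ∈ S, s ∈ unitDisk) (_ : ∀ s ∈ S, F s = 0),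
    ∃ G : ℂ → ℂ, DifferentiableOn ℂ G unitDisk ∧ (∀ z ∈ unitDisk, ‖G z‖ ≤ 1) ∧
      ∀ z ∈ unitDisk, F z = (∏ s ∈ S, mobius s z) * G z := by
  classical
  induction S using Finset.induction_on with
  | empty => intro F h1 h2 _ _; exact ⟨F, h1, h2, by simp⟩
  | insert a S ha ih =>
    intro F h1 h2 hS h0
    obtain ⟨G, g1, g2, g3⟩ := schwarz_one h1 h2 (hS a (by simp)) (h0 a (by simp))
    obtain ⟨K, k1, k2, k3⟩ := ih g1 g2 (fun s hs => hS s (by simp [hs])) (by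
      intro s hs
      have h := g3 s (hS s (by simp [hs]))
      rw [h0 s (by simp [hs])] at h
      have : mobius a s ≠ 0 := by
        rw [Ne, mobius_eq_zero (hS a (by simp)) (hS s (by simp [hs]))]
        rintro rfl; exact ha hs
      simpa [this] using h.symm)
    refine ⟨K, k1, k2, fun z hz => ?_⟩
    rw [g3 z hz, k3 z hz, Finset.prod_insert ha, mul_assoc]

theorem isPreconnected_unitDisk : IsPreconnected unitDisk := (convex_ball (0:ℂ) 1).isPreconnected

/-- removable singularities: quotient of analytic functions with `‖N‖ ≤ ‖D‖` -/
theorem exists_quotient {N D : ℂ → ℂ} (hN : DifferentiableOn ℂ N unitDisk) (hD : DifferentiableOn ℂ D unitDisk)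
    (hle : ∀ z ∈ unitDisk, ‖N z‖ ≤ ‖D z‖) (hD0 : ∃ z ∈ unitDisk, D z ≠ 0) :
    ∃ F : ℂ → ℂ, DifferentiableOn ℂ F unitDisk ∧ (∀ z ∈ unitDisk, ‖F z‖ ≤ 1) ∧
      ∀ z ∈ unitDisk, D z ≠ 0 → F z = N z / D z := by
  have hev : ∀ z ∈ unitDisk, ∀ᶠ x in 𝓝[≠] z, D x ≠ 0 := by
    intro z hz
    have hDa := hD.analyticOnNhd unitDisk_open
    rcases (hDa z hz).eventually_eq_zero_or_eventually_ne_zero with h | h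
    · exfalso
      obtain ⟨y, hy, hy0⟩ := hD0
      exact hy0 (hDa.eqOn_zero_of_preconnected_of_eventuallyEq_zero isPreconnected_unitDisk hz h hy)
    · exact h
  let q : ℂ → ℂ := fun z => N z / D z
  have hq : ∀ z ∈ unitDisk, ‖q z‖ ≤ 1 := by
    intro z hz
    simp only [q, norm_div]
    exact div_le_one_of_le₀ (hle z hz) (norm_nonneg _)
  let F : ℂ → ℂ := fun z => limUnder (𝓝[≠] z) q
  have hqa : ∀ z ∈ unitDisk, D z ≠ 0 → DifferentiableAt ℂ q z := fun z hz h0 =>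
    (hN.differentiableAt (unitDisk_open.mem_nhds hz)).div (hD.differentiableAt (unitDisk_open.mem_nhds hz)) h0
  have hFq : ∀ z ∈ unitDisk, D z ≠ 0 → F z = q z := by
    intro z hz h0
    exact ((hqa z hz h0).continuousAt.tendsto.mono_left nhdsWithin_le_nhds).limUnder_eq
  have hFd : DifferentiableOn ℂ F unitDisk := by
    intro z hz
    apply DifferentiableAt.differentiableWithinAt
    have h1 := hev z hz
    rw [eventually_nhdsWithin_iff] at h1
    obtain ⟨s, hs, hso, hzs⟩ := eventually_nhds_iff.1 (h1.and (unitDisk_open.mem_nhds hz))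
    have := Complex.differentiableOn_update_limUnder_of_bddAbove (f := q) (c := z) (s := s) (hso.mem_nhds hzs)
      (by
        intro x hx
        exact (hqa x (hs x hx.1).2 ((hs x hx.1).1 hx.2)).differentiableWithinAt)
      ⟨1, by
        rintro _ ⟨x, hx, rfl⟩
        exact hq x (hs x hx.1).2⟩
    refine (this.differentiableAt (hso.mem_nhds hzs)).congr_of_eventuallyEq ?_
    filter_upwards [hso.mem_nhds hzs] with x hx
    by_cases hxz : x = z
    · subst hxz; simp [F]
    · rw [Function.update_of_ne hxz]
      exact hFq x (hs x hx).2 ((hs x hx).1 hxz)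
  refine ⟨F, hFd, ?_, hFq⟩
  intro z hz
  have hc : Tendsto (fun x => ‖F x‖) (𝓝[≠] z) (𝓝 ‖F z‖) :=
    ((hFd.continuousOn.continuousAt (unitDisk_open.mem_nhds hz)).norm).tendsto.mono_left nhdsWithin_le_nhds
  refine le_of_tendsto hc ?_
  filter_upwards [hev z hz, nhdsWithin_le_nhds (unitDisk_open.mem_nhds hz)] with x hx hx2
  rw [hFq x hx2 hx]
  exact hq x hx2

/-! ### Takenaka–Malmquist basis of the unweighted space -/

abbrev o1 : ℕ → ℝ := fun _ => 1

theorem exists_shift_one : ∃ S : H2 →L[ℂ] H2, (∀ a, ∀ z ∈ unitDisk, repFun o1 (S a) z = z * repFun o1 a z) ∧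
    ∀ a, ‖S a‖ = ‖a‖ := by
  obtain ⟨S, hS⟩ := exists_shift good_one
  refine ⟨S, hS, fun a => ?_⟩
  have hm : Memℓp (fun n : ℕ => match n with | 0 => (0:ℂ) | k + 1 => a k) 2 := by
    apply memlp_of_sq
    rw [← summable_nat_add_iff 1]
    exact (h2_norm_sq a).summable
  let b : H2 := ⟨_, hm⟩
  have hb0 : b 0 = 0 := rfl
  have hb1 : ∀ k, b (k + 1) = a k := fun k => rfl
  have hSb : S a = b := by
    apply repFun_inj good_one
    intro z hz
    rw [hS a z hz]
    have h1 := hasSum_repFun good_one hz a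
    rw [← repFun_eq] at h1
    have h2 := hasSum_repFun good_one hz b
    rw [← repFun_eq] at h2
    refine HasSum.unique ?_ h2
    rw [← hasSum_nat_add_iff' 1]
    simp only [Finset.range_one, Finset.sum_singleton, hb0, hb1, zero_div, zero_mul, sub_zero]
    refine (h1.mul_left z).congr_fun fun k => ?_
    ring
  have h3 := h2_norm_sq b
  rw [← hasSum_nat_add_iff' 1] at h3
  simp only [Finset.range_one, Finset.sum_singleton, hb0, hb1, norm_zero] at h3
  have h4 := h3.unique (h2_norm_sq a)
  rw [hSb]
  have : ‖b‖ ^ 2 = ‖a‖ ^ 2 := by simpa using h4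
  exact (sq_eq_sq₀ (norm_nonneg _) (norm_nonneg _)).1 this

theorem repFun_kerv_one {a z : ℂ} (ha : a ∈ unitDisk) (hz : z ∈ unitDisk) :
    repFun o1 (kerv good_one ha) z = 1 / (1 - (starRingEnd ℂ) a * z) := by
  have h : ‖(starRingEnd ℂ) a * z‖ < 1 := by
    rw [norm_mul, RCLike.norm_conj]; exact mul_lt_one_disk ha hz
  rw [repFun, one_div, ← tsum_geometric_of_norm_lt_one h]
  congr 1
  ext k
  simp [kerv, mul_pow]

theorem exists_mob {a : ℂ} (ha : a ∈ unitDisk) : ∃ M : H2 →L[ℂ] H2, RepMul o1 (mobius a) M ∧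
    (∀ x, ‖M x‖ = ‖x‖) ∧ ∀ x, repFun o1 x a = 0 → ∃ y, x = M y := by
  obtain ⟨S, hS, hn⟩ := exists_shift_one
  have hS1 : ‖S‖ ≤ 1 := S.opNorm_le_bound zero_le_one fun x => by rw [hn, one_mul]
  have ha' := mem_unitDisk.1 ha
  have hlt : ‖(starRingEnd ℂ) a • S‖ < 1 := by
    rw [norm_smul, RCLike.norm_conj]
    nlinarith [norm_nonneg a, norm_nonneg S]
  obtain ⟨U, hU⟩ : IsUnit (1 - (starRingEnd ℂ) a • S) := isUnit_one_sub_of_norm_lt_one hlt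
  let W : H2 →L[ℂ] H2 := ↑U⁻¹
  have hW : ∀ x, W x - (starRingEnd ℂ) a • S (W x) = x := by
    intro x
    have : (U : H2 →L[ℂ] H2) * ↑U⁻¹ = 1 := U.mul_inv
    rw [hU] at this
    have := congrArg (fun T : H2 →L[ℂ] H2 => T x) this
    simpa [W] using this
  let M : H2 →L[ℂ] H2 := a • W - S.comp W
  have hMx : ∀ x, M x = a • W x - S (W x) := fun x => rfl
  have hM : RepMul o1 (mobius a) M := by
    intro x z hz
    have h1 := den_ne_disk ha hz
    have e1 := congrArg (fun y => repFun o1 y z) (hW x)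
    simp only [← ev_apply good_one hz, map_sub, map_smul] at e1
    rw [hMx]
    simp only [← ev_apply good_one hz, map_sub, map_smul]
    simp only [ev_apply good_one hz, hS _ z hz] at *
    rw [← e1, mobius]
    simp only [smul_eq_mul]
    rw [div_mul_eq_mul_div, eq_div_iff h1]
    ring
  have hiso : ∀ x, ‖M x‖ = ‖x‖ := by
    intro x
    have : ‖M x‖ ^ 2 = ‖x‖ ^ 2 := by
      conv_rhs => rw [← hW x]
      rw [hMx, @norm_sub_sq ℂ, @norm_sub_sq ℂ, inner_smul_left, inner_smul_right, norm_smul, norm_smul, hn,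
        RCLike.norm_conj]
      ring
    exact (sq_eq_sq₀ (norm_nonneg _) (norm_nonneg _)).1 this
  refine ⟨M, hM, hiso, fun x hx => ⟨ContinuousLinearMap.adjoint M x, ?_⟩⟩
  apply repFun_inj good_one
  intro w hw
  rw [hM _ w hw, repFun_eq good_one hw, repFun_eq good_one hw, ContinuousLinearMap.adjoint_inner_right]
  rw [repFun_eq good_one ha] at hx
  have key : (starRingEnd ℂ) (mobius a w) • M (kerv good_one hw) =
      kerv good_one hw - ((1 - ‖a‖ ^ 2 : ℝ) * (1 / (1 - a * (starRingEnd ℂ) w)) : ℂ) • kerv good_one ha := by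
    apply repFun_inj good_one
    intro z hz
    have h1 := den_ne_disk ha hz
    have h2 := den_ne_disk ha hw
    have h3 := den_ne_disk hw hz
    have h4 : 1 - a * (starRingEnd ℂ) w ≠ 0 := by
      intro h
      apply h2
      have := congrArg (starRingEnd ℂ) h
      simpa using this
    have e0 : ((1 - ‖a‖ ^ 2 : ℝ) : ℂ) = 1 - a * (starRingEnd ℂ) a := by
      push_cast
      rw [Complex.mul_conj, Complex.normSq_eq_norm_sq]; push_cast; rfl
    rw [e0]
    simp only [← ev_apply good_one hz, map_sub, map_smul]
    simp only [ev_apply good_one hz, hM _ z hz, repFun_kerv_one hw hz, repFun_kerv_one ha hz, smul_eq_mul]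
    simp only [mobius, map_div₀, map_sub, map_mul, map_one, Complex.conj_conj]
    generalize (starRingEnd ℂ) a = a' at *
    generalize (starRingEnd ℂ) w = w' at *
    rw [div_mul_div_comm, div_mul_div_comm, mul_one_div, mul_one_div, div_div, div_sub_div _ _ h3
      (mul_ne_zero h4 h1), div_eq_div_iff (mul_ne_zero h4 (mul_ne_zero h1 h3))
      (mul_ne_zero h3 (mul_ne_zero h4 h1))]
    ring
  have e := congrArg (fun v => inner ℂ v x) key
  simp only [inner_sub_left, inner_smul_left, hx, mul_zero, sub_zero, Complex.conj_conj] at e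
  rw [e]

/-- Takenaka–Malmquist functions. -/
def TM (a u : ℕ → ℂ) (n : ℕ) (z : ℂ) : ℂ :=
  (Real.sqrt (1 - ‖a n‖ ^ 2) : ℂ) * (1 / (1 - (starRingEnd ℂ) (a n) * z)) *
    ∏ i ∈ Finset.range n, (u i * mobius (a i) z)

theorem inner_of_norm (T : H2 →L[ℂ] H2) (h : ∀ x, ‖T x‖ = ‖x‖) (x y : H2) :
    inner ℂ (T x) (T y) = inner ℂ x y := by
  let L : H2 →ₗᵢ[ℂ] H2 := { (T : H2 →ₗ[ℂ] H2) with norm_map' := h }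
  exact L.inner_map_map x y

theorem tm_basis {a u : ℕ → ℂ} (ha : ∀ n, a n ∈ unitDisk) (hu : ∀ n, ‖u n‖ = 1)
    (hdiv : ∀ z ∈ unitDisk, Tendsto (fun n => ∏ i ∈ Finset.range n, ‖mobius (a i) z‖) atTop (𝓝 0)) :
    ∃ b : HilbertBasis ℕ ℂ H2, ∀ n, ∀ z ∈ unitDisk, repFun o1 (b n) z = TM a u n z := by
  choose M hM hMn hMr using fun n => exists_mob (ha n)
  obtain ⟨Q, Q0, Qs⟩ : ∃ Q : ℕ → H2 →L[ℂ] H2, (∀ x, Q 0 x = x) ∧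
      ∀ n x, Q (n + 1) x = u n • Q n (M n x) :=
    ⟨fun n => Nat.rec (ContinuousLinearMap.id ℂ H2)
      (fun k q => u k • q.comp (M k)) n, fun x => rfl, fun n x => rfl⟩
  have Qn : ∀ n x, ‖Q n x‖ = ‖x‖ := by
    intro n
    induction n with
    | zero => intro x; rw [Q0]
    | succ n ih => intro x; rw [Qs, norm_smul, hu, one_mul, ih, hMn]
  have Qf : ∀ n x, ∀ z ∈ unitDisk,
      repFun o1 (Q n x) z = (∏ i ∈ Finset.range n, (u i * mobius (a i) z)) * repFun o1 x z := by
    intro n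
    induction n with
    | zero => intro x z hz; simp [Q0]
    | succ n ih =>
      intro x z hz
      rw [Qs, repFun_smul good_one hz, ih _ z hz, hM n _ z hz, Finset.prod_range_succ]; ring
  have Qi : ∀ n x y, inner ℂ (Q n x) (Q n y) = inner ℂ x y := by
    intro n x y
    exact inner_of_norm (Q n) (Qn n) x y
  have Qr : ∀ k l, k ≤ l → ∀ x, ∃ y, Q l x = Q k y := by
    intro k l hkl
    induction l, hkl using Nat.le_induction with
    | base => exact fun x => ⟨x, rfl⟩
    | succ l _ ih =>
      intro x
      obtain ⟨y, hy⟩ := ih (u l • M l x)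
      exact ⟨y, by rw [Qs, ← hy, map_smul]⟩
  have hpos : ∀ n, 0 < 1 - ‖a n‖ ^ 2 := fun n => by
    have := mem_unitDisk.1 (ha n)
    nlinarith [norm_nonneg (a n)]
  let e : ℕ → H2 := fun n => Q n ((Real.sqrt (1 - ‖a n‖ ^ 2) : ℂ) • kerv good_one (ha n))
  have hnorm : ∀ n, ‖e n‖ = 1 := by
    intro n
    have hk : ‖kerv good_one (ha n)‖ ^ 2 = 1 / (1 - ‖a n‖ ^ 2) := by
      have h1 := repFun_kerv_one (ha n) (ha n)
      rw [repFun_eq good_one (ha n), inner_self_eq_norm_sq_to_K] at h1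
      have e0 : (starRingEnd ℂ) (a n) * a n = ((‖a n‖ ^ 2 : ℝ) : ℂ) := by
        rw [mul_comm, Complex.mul_conj, Complex.normSq_eq_norm_sq]
      rw [e0] at h1
      apply Complex.ofReal_injective
      rw [Complex.ofReal_pow]
      refine Eq.trans h1 ?_
      push_cast; rfl
    have : ‖e n‖ ^ 2 = 1 := by
      simp only [e]
      rw [Qn, norm_smul, mul_pow, hk, Complex.norm_real, Real.norm_of_nonneg (Real.sqrt_nonneg _),
        Real.sq_sqrt (hpos n).le, mul_one_div, div_self (hpos n).ne']
    have h0 := norm_nonneg (e n)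
    nlinarith
  have horth : ∀ k l, k < l → inner ℂ (e k) (e l) = 0 := by
    intro k l hkl
    obtain ⟨y, hy⟩ := Qr (k + 1) l hkl ((Real.sqrt (1 - ‖a l‖ ^ 2) : ℂ) • kerv good_one (ha l))
    simp only [e]
    rw [hy, Qs, inner_smul_right, Qi, inner_smul_left, ← repFun_eq, hM k _ _ (ha k)]
    simp [mobius]
  have hon : Orthonormal ℂ e := by
    refine ⟨hnorm, fun k l hkl => ?_⟩
    rcases lt_or_gt_of_ne hkl with h | h
    · exact horth k l h
    · rw [← inner_conj_symm, horth l k h, map_zero]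
  have hbot : (Submodule.span ℂ (Set.range e))ᗮ = ⊥ := by
    rw [Submodule.eq_bot_iff]
    intro x hx
    have hx' : ∀ n, inner ℂ (e n) x = 0 := fun n =>
      (Submodule.mem_orthogonal _ x).1 hx _ (Submodule.subset_span ⟨n, rfl⟩)
    have step : ∀ n, ∃ y, x = Q n y := by
      intro n
      induction n with
      | zero => exact ⟨x, (Q0 x).symm⟩
      | succ n ih =>
        obtain ⟨y, hy⟩ := ih
        have h1 := hx' n
        simp only [e] at h1
        rw [hy] at h1
        rw [Qi, inner_smul_left, ← repFun_eq] at h1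
        have h2 : repFun o1 y (a n) = 0 := by
          rcases mul_eq_zero.1 h1 with h | h
          · exfalso
            have : Real.sqrt (1 - ‖a n‖ ^ 2) ≠ 0 := (Real.sqrt_pos.2 (hpos n)).ne'
            apply this
            simpa using h
          · exact h
        obtain ⟨y', hy'⟩ := hMr n y h2
        have hun : u n ≠ 0 := by
          intro h; have := hu n; rw [h, norm_zero] at this; exact zero_ne_one this
        refine ⟨(u n)⁻¹ • y', ?_⟩
        rw [Qs, map_smul, map_smul, smul_smul, mul_inv_cancel₀ hun, one_smul, ← hy', hy]
    apply repFun_inj good_one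
    intro z hz
    have hb : ∀ n, ‖repFun o1 x z‖ ≤ (∏ i ∈ Finset.range n, ‖mobius (a i) z‖) * (‖kerv good_one hz‖ * ‖x‖) := by
      intro n
      obtain ⟨y, hy⟩ := step n
      have hxy : ‖x‖ = ‖y‖ := by rw [hy, Qn]
      rw [hxy]
      conv_lhs => rw [hy, Qf n y z hz, norm_mul, norm_prod]
      simp only [norm_mul, hu, one_mul]
      rw [repFun_eq good_one hz]
      exact mul_le_mul_of_nonneg_left (norm_inner_le_norm _ _) (Finset.prod_nonneg fun _ _ => norm_nonneg _)
    have hlim := (hdiv z hz).mul_const (‖kerv good_one hz‖ * ‖x‖)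
    rw [zero_mul] at hlim
    have h0 : ‖repFun o1 x z‖ ≤ 0 := ge_of_tendsto' hlim hb
    have : repFun o1 (0:H2) z = 0 := by
      rw [← ev_apply good_one hz, map_zero]
    rw [this]
    simpa using h0
  refine ⟨HilbertBasis.mkOfOrthogonalEqBot hon hbot, fun n z hz => ?_⟩
  rw [HilbertBasis.coe_mkOfOrthogonalEqBot]
  simp only [e]
  rw [Qf n _ z hz, repFun_smul good_one hz, repFun_kerv_one (ha n) hz, TM]
  ring

/-! ### Transfer of cone-decaying matrices to weighted spaces -/

abbrev sg (k : ℕ) : H2 := lp.single 2 k (1 : ℂ)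

def Slow (β : ℕ → ℝ) : Prop :=
  ∀ K : ℕ, ∃ C : ℝ, 0 < C ∧ ∀ n k, n ≤ K * (k + 1) → k ≤ K * (n + 1) → β n ≤ C * β k

def Cone (v : ℕ → ℕ → ℂ) : Prop :=
  ∃ (K : ℕ) (C θ : ℝ), 2 ≤ K ∧ 0 ≤ C ∧ 0 < θ ∧ θ < 1 ∧
    ∀ n k, (K * k < n ∨ K * n < k) → ‖v n k‖ ≤ C * θ ^ n * θ ^ k

theorem sg_apply (k n : ℕ) : sg k n = if n = k then 1 else 0 := by
  simp only [sg, lp.single_apply]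
  split_ifs with h
  · subst h; simp
  · simp [h]

theorem coord_le (x : H2) (k : ℕ) : ‖x k‖ ≤ ‖x‖ := lp.norm_apply_le_norm (by norm_num) x k

theorem exists_coord (n : ℕ) : ∃ L : H2 →L[ℂ] ℂ, ∀ x, L x = x n :=
  ⟨LinearMap.mkContinuous ⟨⟨fun x => x n, fun _ _ => rfl⟩, fun _ _ => rfl⟩ 1
    (fun x => by rw [one_mul]; exact coord_le x n), fun _ => rfl⟩

theorem hasSum_clm {F : Type*} [NormedAddCommGroup F] [NormedSpace ℂ F] (L : H2 →L[ℂ] F) (a : H2) :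
    HasSum (fun k => a k • L (sg k)) (L a) := by
  have ha := lp.hasSum_single (p := 2) (E := fun _ : ℕ => ℂ) (by norm_num) a
  have e : ∀ k, lp.single (E := fun _ : ℕ => ℂ) 2 k (a k) = a k • sg k := by
    intro k
    rw [sg, ← lp.single_smul]; simp
  have := ha.mapL L
  simpa only [e, map_smul] using this

theorem hasSum_coord (V : H2 →L[ℂ] H2) (y : H2) (n : ℕ) :
    HasSum (fun k => V (sg k) n * y k) (V y n) := by
  obtain ⟨L, hL⟩ := exists_coord n
  have := hasSum_clm (L.comp V) y
  simp only [ContinuousLinearMap.comp_apply, hL, smul_eq_mul] at this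
  simpa only [mul_comm] using this

theorem exists_rank_dom (m : ℕ → ℕ → ℂ) (p q : ℕ → ℝ) (hp0 : ∀ n, 0 ≤ p n) (hq0 : ∀ n, 0 ≤ q n)
    (hp : Summable p) (hq : Summable q) (hm : ∀ n k, ‖m n k‖ ≤ p n * q k) :
    ∃ T : H2 →L[ℂ] H2, ∀ x n, HasSum (fun k => m n k * x k) (T x n) := by
  have hb : ∀ (x : H2) n k, ‖m n k * x k‖ ≤ p n * ‖x‖ * q k := by
    intro x n k
    rw [norm_mul]
    have h1 := coord_le x k
    have h2 := hm n k
    calc ‖m n k‖ * ‖x k‖ ≤ (p n * q k) * ‖x‖ :=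
          mul_le_mul h2 h1 (norm_nonneg _) (mul_nonneg (hp0 n) (hq0 k))
      _ = _ := by ring
  have hs : ∀ (x : H2) n, Summable fun k => m n k * x k := fun x n =>
    Summable.of_norm_bounded (hq.mul_left (p n * ‖x‖)) (hb x n)
  have hP : 0 ≤ ∑' n, p n := tsum_nonneg hp0
  have hQ : 0 ≤ ∑' n, q n := tsum_nonneg hq0
  obtain ⟨T, hT⟩ := exists_clm (fun x n => ∑' k, m n k * x k)
    (by
      intro x y n
      rw [← (hs x n).tsum_add (hs y n)]
      congr 1; ext k; simp [mul_add])
    (by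
      intro c x n
      rw [← tsum_mul_left]
      congr 1; ext k; simp; ring) ((∑' n, p n) * ∑' n, q n) (mul_nonneg hP hQ) (by
      intro x s
      have h1 : ∀ n, ‖∑' k, m n k * x k‖ ≤ p n * (‖x‖ * ∑' k, q k) := by
        intro n
        have := tsum_of_norm_bounded ((hq.mul_left (p n * ‖x‖)).hasSum) (hb x n)
        rw [tsum_mul_left] at this
        linarith
      have hX : 0 ≤ ‖x‖ * ∑' k, q k := mul_nonneg (norm_nonneg _) hQ
      calc ∑ n ∈ s, ‖∑' k, m n k * x k‖ ^ 2 ≤ ∑ n ∈ s, (p n * (‖x‖ * ∑' k, q k)) ^ 2 :=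
            Finset.sum_le_sum fun n _ => pow_le_pow_left₀ (norm_nonneg _) (h1 n) 2
        _ ≤ (∑ n ∈ s, p n * (‖x‖ * ∑' k, q k)) ^ 2 :=
            Finset.sum_sq_le_sq_sum_of_nonneg fun n _ => mul_nonneg (hp0 n) hX
        _ ≤ _ := by
          rw [← Finset.sum_mul]
          apply pow_le_pow_left₀ (mul_nonneg (Finset.sum_nonneg fun n _ => hp0 n) hX)
          have := hp.sum_le_tsum s (fun n _ => hp0 n)
          calc _ ≤ (∑' n, p n) * (‖x‖ * ∑' k, q k) := mul_le_mul_of_nonneg_right this hX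
            _ = _ := by ring)
  exact ⟨T, fun x n => by rw [hT]; exact (hs x n).hasSum⟩

def nearS (K j : ℕ) : Finset ℕ := (Finset.range (K ^ (j + 2))).filter fun k => j ≤ Nat.log K k + 1

theorem mem_nearS {K : ℕ} (hK : 2 ≤ K) (j k : ℕ) :
    k ∈ nearS K j ↔ Nat.log K k ≤ j + 1 ∧ j ≤ Nat.log K k + 1 := by
  rw [nearS, Finset.mem_filter, Finset.mem_range]
  refine and_congr_left fun _ => ?_
  constructor
  · intro h
    have := Nat.log_lt_of_lt_pow' (b := K) (by omega : j + 2 ≠ 0) h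
    omega
  · intro h
    exact (Nat.lt_pow_succ_log_self (by omega) k).trans_le (Nat.pow_le_pow_right (by omega) (by omega))

theorem log_far {K n k : ℕ} (hK : 2 ≤ K) (h : Nat.log K k + 1 < Nat.log K n) : K * k < n := by
  have h1 := Nat.lt_pow_succ_log_self (b := K) (by omega) k
  have hn : n ≠ 0 := by rintro rfl; simp at h
  have h2 := Nat.pow_log_le_self K hn
  have h3 : K ^ (Nat.log K k + 2) ≤ K ^ Nat.log K n := Nat.pow_le_pow_right (by omega) h
  have h4 : K ^ (Nat.log K k + 2) = K * K ^ (Nat.log K k + 1) := by ring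
  have h5 : K * k < K * K ^ (Nat.log K k + 1) := Nat.mul_lt_mul_of_pos_left h1 (by omega)
  omega

theorem log_near {K n k : ℕ} (hK : 2 ≤ K) (h : Nat.log K n ≤ Nat.log K k + 1) : n ≤ K ^ 2 * (k + 1) := by
  have h1 : n < K ^ (Nat.log K n + 1) := Nat.lt_pow_succ_log_self (b := K) (by omega) n
  have h3 : K ^ (Nat.log K n + 1) ≤ K ^ (Nat.log K k + 2) := Nat.pow_le_pow_right (by omega) (by omega)
  have h4 : K ^ (Nat.log K k + 2) = K ^ 2 * K ^ Nat.log K k := by ring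
  have h5 : K ^ Nat.log K k ≤ k + 1 := by
    rcases eq_or_ne k 0 with rfl | hk
    · simp
    · exact (Nat.pow_log_le_self K hk).trans (by omega)
  have h6 : K ^ 2 * K ^ Nat.log K k ≤ K ^ 2 * (k + 1) := Nat.mul_le_mul_left _ h5
  omega

theorem exists_near {β : ℕ → ℝ} (hβ : Good β) (hs : Slow β) (V : H2 →L[ℂ] H2) {K : ℕ} (hK : 2 ≤ K) :
    ∃ T : H2 →L[ℂ] H2, ∀ x n, T x n =
      ∑ k ∈ nearS K (Nat.log K n), (β n : ℂ) * V (sg k) n * (x k / (β k : ℂ)) := by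
  obtain ⟨C, hC, hCb⟩ := hs (K ^ 2)
  have hcmp : ∀ n k, Nat.log K n ≤ Nat.log K k + 1 → Nat.log K k ≤ Nat.log K n + 1 → β n ≤ C * β k :=
    fun n k h1 h2 => hCb n k (log_near hK h1) (log_near hK h2)
  let P : H2 → ℕ → H2 := fun x j => ∑ k ∈ nearS K j, (x k / (β k : ℂ)) • sg k
  have hP : ∀ x j i, P x j i = if i ∈ nearS K j then x i / (β i : ℂ) else 0 := by
    intro x j i
    obtain ⟨L, hL⟩ := exists_coord i
    rw [← hL, map_sum]
    simp only [map_smul]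
    simp only [hL, sg_apply]
    simp
  have hA : ∀ x n, ∑ k ∈ nearS K (Nat.log K n), (β n : ℂ) * V (sg k) n * (x k / (β k : ℂ)) =
      (β n : ℂ) * V (P x (Nat.log K n)) n := by
    intro x n
    obtain ⟨L, hL⟩ := exists_coord n
    rw [← hL, map_sum, map_sum, Finset.mul_sum]
    refine Finset.sum_congr rfl fun k _ => ?_
    simp only [map_smul]
    simp only [hL, smul_eq_mul]
    ring
  refine exists_clm (fun x n => ∑ k ∈ nearS K (Nat.log K n), (β n : ℂ) * V (sg k) n * (x k / (β k : ℂ))) ?_ ?_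
    (2 * C ^ 2 * ‖V‖) (by positivity) ?_
  · intro x y n
    rw [← Finset.sum_add_distrib]
    refine Finset.sum_congr rfl fun k _ => ?_
    simp only [lp.coeFn_add, Pi.add_apply]; ring
  · intro c x n
    rw [Finset.mul_sum]
    refine Finset.sum_congr rfl fun k _ => ?_
    simp only [lp.coeFn_smul, Pi.smul_apply, smul_eq_mul]; ring
  intro x s
  simp only [hA]
  have hblock : ∀ j, ∑ n ∈ s with Nat.log K n = j, ‖(β n : ℂ) * V (P x (Nat.log K n)) n‖ ^ 2 ≤
      (C ^ 2 * ‖V‖) ^ 2 * ∑ k ∈ nearS K j, ‖x k‖ ^ 2 := by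
    intro j
    have hlog : Nat.log K (K ^ j) = j := Nat.log_pow (by omega) j
    set b := β (K ^ j) with hb
    have hbpos : 0 < b := hβ.pos _
    have hPn : (b * ‖P x j‖) ^ 2 ≤ C ^ 2 * ∑ k ∈ nearS K j, ‖x k‖ ^ 2 := by
      have h1 : HasSum (fun i => ‖P x j i‖ ^ 2) (∑ i ∈ nearS K j, ‖P x j i‖ ^ 2) :=
        hasSum_sum_of_ne_finset_zero fun i hi => by rw [hP, if_neg hi]; simp
      rw [mul_pow, ← h1.unique (h2_norm_sq (P x j)), Finset.mul_sum, Finset.mul_sum]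
      refine Finset.sum_le_sum fun k hk => ?_
      rw [hP, if_pos hk, norm_div, Complex.norm_real, Real.norm_of_nonneg (hβ.pos k).le, ← mul_pow, ← mul_pow]
      apply pow_le_pow_left₀ (mul_nonneg hbpos.le (div_nonneg (norm_nonneg _) (hβ.pos k).le))
      have hk' := (mem_nearS hK j k).1 hk
      have := hcmp (K ^ j) k (by rw [hlog]; exact hk'.2) (by rw [hlog]; exact hk'.1)
      rw [mul_div_assoc', div_le_iff₀ (hβ.pos k)]
      nlinarith [norm_nonneg (x k)]
    calc _ ≤ ∑ n ∈ s with Nat.log K n = j, (C * b) ^ 2 * ‖V (P x j) n‖ ^ 2 := by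
          refine Finset.sum_le_sum fun n hn => ?_
          have hn' : Nat.log K n = j := (Finset.mem_filter.1 hn).2
          rw [hn', norm_mul, Complex.norm_real, Real.norm_of_nonneg (hβ.pos n).le, mul_pow]
          have := hcmp n (K ^ j) (by rw [hlog, hn']; omega) (by rw [hlog, hn']; omega)
          have h0 := (hβ.pos n).le
          gcongr
      _ ≤ (C * b) ^ 2 * ‖V (P x j)‖ ^ 2 := by
          rw [← Finset.mul_sum]
          exact mul_le_mul_of_nonneg_left (h2_sum_le _ _) (by positivity)
      _ ≤ (C * b) ^ 2 * (‖V‖ * ‖P x j‖) ^ 2 := by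
          gcongr
          exact V.le_opNorm _
      _ = (C * ‖V‖) ^ 2 * (b * ‖P x j‖) ^ 2 := by ring
      _ ≤ (C * ‖V‖) ^ 2 * (C ^ 2 * ∑ k ∈ nearS K j, ‖x k‖ ^ 2) := by gcongr
      _ = _ := by ring
  rw [← Finset.sum_fiberwise_of_maps_to (s := s) (t := s.image (Nat.log K)) (g := Nat.log K)
    (fun n hn => Finset.mem_image_of_mem _ hn)]
  refine (Finset.sum_le_sum fun j _ => hblock j).trans ?_
  rw [← Finset.mul_sum]
  have hcount : ∑ j ∈ s.image (Nat.log K), ∑ k ∈ nearS K j, ‖x k‖ ^ 2 ≤ 3 * ‖x‖ ^ 2 := by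
    set t := s.image (Nat.log K)
    rw [Finset.sum_comm' (t' := t.biUnion (nearS K)) (s' := fun k => t.filter fun j => k ∈ nearS K j)
      (by
        intro j k
        simp only [Finset.mem_filter, Finset.mem_biUnion]
        constructor
        · rintro ⟨h1, h2⟩; exact ⟨⟨h1, h2⟩, j, h1, h2⟩
        · rintro ⟨h, _⟩; exact h)]
    calc _ ≤ ∑ k ∈ t.biUnion (nearS K), 3 * ‖x k‖ ^ 2 := by
          refine Finset.sum_le_sum fun k _ => ?_
          rw [Finset.sum_const, nsmul_eq_mul]
          have : (t.filter fun j => k ∈ nearS K j).card ≤ 3 := by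
            refine (Finset.card_le_card (t := Finset.Icc (Nat.log K k - 1) (Nat.log K k + 1)) ?_).trans ?_
            · intro j hj
              have := (mem_nearS hK j k).1 (Finset.mem_filter.1 hj).2
              rw [Finset.mem_Icc]; omega
            · simp; omega
          have h3 : ((t.filter fun j => k ∈ nearS K j).card : ℝ) ≤ 3 := by exact_mod_cast this
          gcongr
      _ ≤ _ := by
          rw [← Finset.mul_sum]
          exact mul_le_mul_of_nonneg_left (h2_sum_le x _) (by norm_num)
  calc _ ≤ (C ^ 2 * ‖V‖) ^ 2 * (3 * ‖x‖ ^ 2) := by gcongr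
    _ ≤ (C ^ 2 * ‖V‖) ^ 2 * (4 * ‖x‖ ^ 2) := by gcongr; norm_num
    _ = _ := by ring

theorem transfer {β : ℕ → ℝ} (hβ : Good β) (hs : Slow β) (V : H2 →L[ℂ] H2)
    (hv : Cone fun n k => V (sg k) n) :
    ∃ T : H2 →L[ℂ] H2, ∀ x y : H2, (∀ k, x k = (β k : ℂ) * y k) → ∀ n, T x n = (β n : ℂ) * V y n := by
  obtain ⟨K, C, θ, hK, hC, h0, h1, hv⟩ := hv
  obtain ⟨T₁, hT₁⟩ := exists_near hβ hs V hK
  obtain ⟨T₂, hT₂⟩ := exists_rank_dom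
    (fun n k => if k ∈ nearS K (Nat.log K n) then 0 else (β n : ℂ) * V (sg k) n / (β k : ℂ))
    (fun n => C * (θ ^ n * β n)) (fun k => θ ^ k / β k)
    (fun n => mul_nonneg hC (mul_nonneg (pow_nonneg h0.le _) (hβ.pos n).le))
    (fun k => div_nonneg (pow_nonneg h0.le _) (hβ.pos k).le)
    ((hβ.smul θ h0 h1).mul_left C) (hβ.sdiv θ h0 h1) (by
      intro n k
      dsimp only
      split_ifs with h
      · rw [norm_zero]
        exact mul_nonneg (mul_nonneg hC (mul_nonneg (pow_nonneg h0.le _) (hβ.pos n).le))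
          (div_nonneg (pow_nonneg h0.le _) (hβ.pos k).le)
      · rw [mem_nearS hK, not_and_or, not_le, not_le] at h
        have := hv n k (h.symm.imp (log_far hK) (log_far hK))
        rw [norm_div, norm_mul, Complex.norm_real, Complex.norm_real, Real.norm_of_nonneg (hβ.pos n).le,
          Real.norm_of_nonneg (hβ.pos k).le, mul_div_assoc']
        have hk := hβ.pos k
        have hn := hβ.pos n
        refine div_le_div_of_nonneg_right ?_ hk.le
        calc β n * ‖V (sg k) n‖ ≤ β n * (C * θ ^ n * θ ^ k) := by gcongr
          _ = _ := by ring)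
  refine ⟨T₁ + T₂, fun x y hxy n => ?_⟩
  have e1 : T₁ x n = ∑ k ∈ nearS K (Nat.log K n), (β n : ℂ) * V (sg k) n * y k := by
    rw [hT₁]
    refine Finset.sum_congr rfl fun k _ => ?_
    have hk : (β k : ℂ) ≠ 0 := by exact_mod_cast (hβ.pos k).ne'
    rw [hxy, mul_div_cancel_left₀ _ hk]
  have s1 : HasSum (fun k => if k ∈ nearS K (Nat.log K n) then (β n : ℂ) * V (sg k) n * y k else 0)
      (T₁ x n) := by
    rw [e1]
    have : ∑ k ∈ nearS K (Nat.log K n), (β n : ℂ) * V (sg k) n * y k =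
      ∑ k ∈ nearS K (Nat.log K n),
        (if k ∈ nearS K (Nat.log K n) then (β n : ℂ) * V (sg k) n * y k else 0) :=
      Finset.sum_congr rfl fun k hk => by rw [if_pos hk]
    rw [this]
    exact hasSum_sum_of_ne_finset_zero fun k hk => by rw [if_neg hk]
  have s2 := s1.add (hT₂ x n)
  have s3 := (hasSum_coord V y n).mul_left (β n : ℂ)
  have : (T₁ + T₂) x n = T₁ x n + T₂ x n := rfl
  rw [this]
  refine s2.unique (s3.congr_fun fun k => ?_)
  have hk : (β k : ℂ) ≠ 0 := by exact_mod_cast (hβ.pos k).ne'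
  rw [hxy k]
  split_ifs
  · ring
  · field_simp
    ring

theorem slow_betaSeq {w : ℕ → ℝ} (hw : PolyGrowth w) : Slow (betaSeq w) := by
  obtain ⟨hpos, hlim, M, hM⟩ := id hw
  have hw1 : Tendsto (fun n => (w (n + 1))⁻¹) atTop (𝓝 1) := by
    simpa using ((tendsto_add_atTop_iff_nat 1).2 hlim).inv₀ one_ne_zero
  obtain ⟨D, hD⟩ := hw1.bddAbove_range
  have hD' : ∀ j, (w (j + 1))⁻¹ ≤ D := fun j => hD ⟨j, rfl⟩
  have hD0 : 0 ≤ D := (inv_nonneg.2 (hpos 1 le_rfl).le).trans (hD' 0)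
  have hM0 : 0 ≤ M := le_trans (by positivity) (hM 1 le_rfl)
  set A := M * (1 + D) with hA
  have hA0 : 0 ≤ A := by positivity
  have hb := betaSeq_pos hw
  have up : ∀ j : ℕ, w (j + 1) ≤ Real.exp (A / (j + 1)) := by
    intro j
    have h1 := hM (j + 1) (by omega)
    push_cast at h1
    have h2 : w (j + 1) - 1 ≤ |w (j + 1) - 1| := le_abs_self _
    have h3 : |w (j + 1) - 1| ≤ A / (j + 1) := by
      rw [le_div_iff₀ (by positivity)]
      have := abs_nonneg (w (j + 1) - 1)
      nlinarith [mul_nonneg hM0 hD0]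
    linarith [Real.add_one_le_exp (A / (j + 1))]
  have dn : ∀ j : ℕ, (w (j + 1))⁻¹ ≤ Real.exp (A / (j + 1)) := by
    intro j
    have h1 := hM (j + 1) (by omega)
    push_cast at h1
    have hp := hpos (j + 1) (by omega)
    have h2 : (w (j + 1))⁻¹ - 1 = (1 - w (j + 1)) * (w (j + 1))⁻¹ := by
      field_simp
    have h3 : (1 - w (j + 1)) ≤ |w (j + 1) - 1| := by rw [abs_sub_comm]; exact le_abs_self _
    have h4 : (1 - w (j + 1)) * (w (j + 1))⁻¹ ≤ |w (j + 1) - 1| * D :=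
      mul_le_mul h3 (hD' j) (inv_nonneg.2 hp.le) (abs_nonneg _)
    have h5 : |w (j + 1) - 1| * D ≤ A / (j + 1) := by
      rw [le_div_iff₀ (by positivity)]
      have := abs_nonneg (w (j + 1) - 1)
      nlinarith [mul_nonneg this hD0]
    linarith [Real.add_one_le_exp (A / (j + 1))]
  have both : ∀ k d : ℕ, betaSeq w (k + d) ≤ betaSeq w k * Real.exp (A / (k + 1) * d) ∧
      betaSeq w k ≤ betaSeq w (k + d) * Real.exp (A / (k + 1) * d) := by
    intro k d
    induction d with
    | zero => simp
    | succ d ih =>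
      have hp := hpos (k + d + 1) (by omega)
      have hmono : Real.exp (A / ((k + d : ℕ) + 1)) ≤ Real.exp (A / (k + 1)) := by
        apply Real.exp_le_exp.2
        apply div_le_div_of_nonneg_left hA0 (by positivity)
        push_cast; linarith [Nat.cast_nonneg (α := ℝ) d]
      have e : Real.exp (A / (k + 1) * ((d + 1 : ℕ) : ℝ)) =
          Real.exp (A / (k + 1) * d) * Real.exp (A / (k + 1)) := by
        rw [← Real.exp_add]; push_cast; ring_nf
      rw [e, ← add_assoc, betaSeq_succ]
      constructor
      · rw [← mul_assoc]
        exact mul_le_mul ih.1 ((up (k + d)).trans hmono) hp.le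
          (mul_nonneg (hb k).le (Real.exp_pos _).le)
      · have h6 : 1 ≤ w (k + d + 1) * Real.exp (A / (k + 1)) := by
          have := (dn (k + d)).trans hmono
          rw [inv_le_iff_one_le_mul₀ hp] at this
          linarith
        have h7 : 0 ≤ betaSeq w (k + d) * Real.exp (A / (k + 1) * d) :=
          mul_nonneg (hb _).le (Real.exp_pos _).le
        nlinarith [ih.2]
  intro K
  refine ⟨Real.exp (A * K), Real.exp_pos _, ?_⟩
  have hexp : ∀ k d : ℕ, k + d ≤ K * (k + 1) → Real.exp (A / (k + 1) * d) ≤ Real.exp (A * K) := by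
    intro k d h
    apply Real.exp_le_exp.2
    rw [div_mul_eq_mul_div, div_le_iff₀ (by positivity), mul_assoc A (K : ℝ)]
    apply mul_le_mul_of_nonneg_left _ hA0
    have : ((k + d : ℕ) : ℝ) ≤ ((K * (k + 1) : ℕ) : ℝ) := by exact_mod_cast h
    push_cast at this
    linarith [Nat.cast_nonneg (α := ℝ) k]
  intro n k h1 h2
  rcases le_total k n with h | h
  · obtain ⟨d, rfl⟩ := Nat.exists_eq_add_of_le h
    have := (both k d).1
    have h3 := hexp k d h1
    have := mul_le_mul_of_nonneg_left h3 (hb k).le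
    linarith
  · obtain ⟨d, rfl⟩ := Nat.exists_eq_add_of_le h
    have := (both n d).2
    have h3 := hexp n d h2
    have := mul_le_mul_of_nonneg_left h3 (hb (n + d)).le
    linarith

/-! ### Decay of the Takenaka–Malmquist matrix, and sufficiency -/

theorem cone_arith {A r : ℝ} (hA : 1 ≤ A) (h0 : 0 < r) (h1 : r < 1) :
    ∃ (K : ℕ) (θ : ℝ), 2 ≤ K ∧ 0 < θ ∧ θ < 1 ∧ ∀ n k : ℕ, K * k < n → A ^ k * r ^ n ≤ θ ^ n * θ ^ k := by
  set θ := 1 - (1 - r) / 3 with hθ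
  have t0 : 0 < θ := by rw [hθ]; linarith
  have t1 : θ < 1 := by rw [hθ]; linarith
  have hr : r ≤ θ ^ 3 := by
    have : r = 3 * θ - 2 := by rw [hθ]; ring
    nlinarith [mul_nonneg (sq_nonneg (θ - 1)) (by linarith : 0 ≤ θ + 2)]
  obtain ⟨K, hK⟩ := exists_pow_lt_of_lt_one (show 0 < A⁻¹ by positivity) t1
  refine ⟨K + 2, θ, by omega, t0, t1, fun n k hn => ?_⟩
  have e1 : r ^ n ≤ θ ^ n * θ ^ n * θ ^ n := by
    calc r ^ n ≤ (θ ^ 3) ^ n := by gcongr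
      _ = _ := by rw [← pow_mul, ← pow_add, ← pow_add]; congr 1; ring
  have e2 : θ ^ n ≤ θ ^ k := pow_le_pow_of_le_one t0.le t1.le (by nlinarith)
  have e3 : A ^ k * θ ^ n ≤ 1 := by
    have : θ ^ n ≤ (θ ^ K) ^ k := by
      rw [← pow_mul]; exact pow_le_pow_of_le_one t0.le t1.le (by nlinarith)
    calc A ^ k * θ ^ n ≤ A ^ k * (A⁻¹) ^ k := by gcongr; exact this.trans (by gcongr)
      _ = 1 := by rw [← mul_pow, mul_inv_cancel₀ (by positivity), one_pow]
  calc A ^ k * r ^ n ≤ A ^ k * (θ ^ n * θ ^ n * θ ^ n) := by gcongr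
    _ = (A ^ k * θ ^ n) * (θ ^ n * θ ^ n) := by ring
    _ ≤ 1 * (θ ^ n * θ ^ k) := by gcongr
    _ = _ := one_mul _

theorem cone_of_bounds {v : ℕ → ℕ → ℂ} {C₁ A₁ r₁ C₂ A₂ r₂ : ℝ} (hA₁ : 1 ≤ A₁) (hr₁ : 0 < r₁) (hr₁' : r₁ < 1)
    (hA₂ : 1 ≤ A₂) (hr₂ : 0 < r₂) (hr₂' : r₂ < 1) (h₁ : ∀ n k, ‖v n k‖ ≤ C₁ * (A₁ ^ k * r₁ ^ n))
    (h₂ : ∀ n k, ‖v n k‖ ≤ C₂ * (A₂ ^ n * r₂ ^ k)) : Cone v := by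
  obtain ⟨K₁, θ₁, hK₁, a₁, b₁, c₁⟩ := cone_arith hA₁ hr₁ hr₁'
  obtain ⟨K₂, θ₂, hK₂, a₂, b₂, c₂⟩ := cone_arith hA₂ hr₂ hr₂'
  refine ⟨K₁ + K₂, |C₁| + |C₂|, max θ₁ θ₂, by omega, by positivity, lt_max_of_lt_left a₁, max_lt b₁ b₂, ?_⟩
  rintro n k (h | h)
  · have := c₁ n k (by nlinarith)
    calc ‖v n k‖ ≤ C₁ * (A₁ ^ k * r₁ ^ n) := h₁ n k
      _ ≤ (|C₁| + |C₂|) * (θ₁ ^ n * θ₁ ^ k) := by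
        apply mul_le_mul _ this (by positivity) (by positivity)
        linarith [le_abs_self C₁, abs_nonneg C₂]
      _ ≤ (|C₁| + |C₂|) * (max θ₁ θ₂ ^ n * max θ₁ θ₂ ^ k) := by gcongr <;> exact le_max_left _ _
      _ = _ := by ring
  · have := c₂ k n (by nlinarith)
    calc ‖v n k‖ ≤ C₂ * (A₂ ^ n * r₂ ^ k) := h₂ n k
      _ ≤ (|C₁| + |C₂|) * (θ₂ ^ k * θ₂ ^ n) := by
        apply mul_le_mul _ this (by positivity) (by positivity)
        linarith [le_abs_self C₂, abs_nonneg C₁]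
      _ ≤ (|C₁| + |C₂|) * (max θ₁ θ₂ ^ k * max θ₁ θ₂ ^ n) := by gcongr <;> exact le_max_right _ _
      _ = _ := by ring

theorem Cone.symm {v : ℕ → ℕ → ℂ} (h : Cone v) : Cone fun n k => (starRingEnd ℂ) (v k n) := by
  obtain ⟨K, C, θ, hK, hC, h0, h1, h⟩ := h
  refine ⟨K, C, θ, hK, hC, h0, h1, fun n k hnk => ?_⟩
  rw [RCLike.norm_conj]
  calc _ ≤ _ := h k n hnk.symm
    _ = _ := by ring

theorem den_lower {a z : ℂ} {ρ R : ℝ} (ha : ‖a‖ ≤ ρ) (hz : ‖z‖ ≤ R) :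
    1 - ρ * R ≤ ‖1 - (starRingEnd ℂ) a * z‖ := by
  have h1 := norm_sub_norm_le (1:ℂ) ((starRingEnd ℂ) a * z)
  rw [norm_one, norm_mul, RCLike.norm_conj] at h1
  have h2 : ‖a‖ * ‖z‖ ≤ ρ * R := mul_le_mul ha hz (norm_nonneg _) ((norm_nonneg _).trans ha)
  linarith

theorem mobius_unif {ρ r : ℝ} (hρ : ρ < 1) (hr : r < 1) (hr0 : 0 ≤ r) (hρ0 : 0 ≤ ρ) :
    ∃ μ : ℝ, 0 < μ ∧ μ < 1 ∧ ∀ a z : ℂ, ‖a‖ ≤ ρ → ‖z‖ ≤ r → ‖mobius a z‖ ≤ μ := by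
  set t := (1 - ρ ^ 2) * (1 - r ^ 2) / 4 with ht
  have e1 : 0 < 1 - ρ ^ 2 := by nlinarith
  have e2 : 0 < 1 - r ^ 2 := by nlinarith
  have t0 : 0 < t := by positivity
  have t1 : t < 1 := by nlinarith [sq_nonneg ρ, sq_nonneg r]
  refine ⟨Real.sqrt (1 - t), Real.sqrt_pos.2 (by linarith), ?_, fun a z ha hz => ?_⟩
  · rw [Real.sqrt_lt' one_pos]; linarith
  · apply Real.le_sqrt_of_sq_le
    have had : a ∈ unitDisk := mem_unitDisk.2 (by linarith)
    have hzd : z ∈ unitDisk := mem_unitDisk.2 (by linarith)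
    have hne := den_ne_disk had hzd
    have h := mobius_identity hne
    have h2 : ‖1 - (starRingEnd ℂ) a * z‖ ≤ 2 := by
      refine (norm_sub_le _ _).trans ?_
      rw [norm_one, norm_mul, RCLike.norm_conj]
      linarith [mul_lt_one_disk had hzd]
    have h3 : t ≤ (1 - ‖a‖ ^ 2) * (1 - ‖z‖ ^ 2) / ‖1 - (starRingEnd ℂ) a * z‖ ^ 2 := by
      have hp : 0 < ‖1 - (starRingEnd ℂ) a * z‖ := norm_pos_iff.2 hne
      rw [ht]
      have f1 : ‖a‖ ^ 2 ≤ ρ ^ 2 := by gcongr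
      have f2 : ‖z‖ ^ 2 ≤ r ^ 2 := by gcongr
      have f3 : ‖1 - (starRingEnd ℂ) a * z‖ ^ 2 ≤ 4 := by nlinarith
      apply div_le_div₀ _ _ (by positivity) f3
      · exact mul_nonneg (by linarith) (by linarith)
      · exact mul_le_mul (by linarith) (by linarith) e2.le (by linarith)
    linarith

theorem tm_bound {a u : ℕ → ℂ} {ρ A δ : ℝ} (hu : ∀ n, ‖u n‖ = 1) (hA : 0 ≤ A) (hδ : 0 < δ)
    {z : ℂ} (h1 : ∀ n, δ ≤ ‖1 - (starRingEnd ℂ) (a n) * z‖) (h2 : ∀ n, ‖mobius (a n) z‖ ≤ A) (n : ℕ) :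
    ‖TM a u n z‖ ≤ δ⁻¹ * A ^ n := by
  rw [TM, norm_mul, norm_mul, norm_prod]
  have e1 : ‖(Real.sqrt (1 - ‖a n‖ ^ 2) : ℂ)‖ ≤ 1 := by
    rw [Complex.norm_real, Real.norm_of_nonneg (Real.sqrt_nonneg _)]
    refine Real.sqrt_le_iff.2 ⟨zero_le_one, ?_⟩
    linarith [sq_nonneg ‖a n‖]
  have e2 : ‖1 / (1 - (starRingEnd ℂ) (a n) * z)‖ ≤ δ⁻¹ := by
    rw [norm_div, norm_one, one_div]
    exact inv_anti₀ hδ (h1 n)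
  have e3 : ∏ i ∈ Finset.range n, ‖u i * mobius (a i) z‖ ≤ A ^ n := by
    calc _ ≤ ∏ i ∈ Finset.range n, A :=
          Finset.prod_le_prod (fun _ _ => norm_nonneg _) fun i _ => by
            rw [norm_mul, hu, one_mul]; exact h2 i
      _ = _ := by simp
  have e4 : 0 ≤ ∏ i ∈ Finset.range n, ‖u i * mobius (a i) z‖ := Finset.prod_nonneg fun _ _ => norm_nonneg _
  calc _ ≤ 1 * δ⁻¹ * A ^ n := by gcongr
    _ = _ := by ring

theorem tm_diff {a u : ℕ → ℂ} {s : Set ℂ} (h : ∀ n, ∀ z ∈ s, ‖a n‖ * ‖z‖ < 1) (n : ℕ) :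
    DifferentiableOn ℂ (TM a u n) s := by
  unfold TM
  refine DifferentiableOn.mul (DifferentiableOn.mul (by fun_prop) ?_) ?_
  · exact DifferentiableOn.div (by fun_prop) (by fun_prop) fun z hz => mobius_den_ne (h n z hz)
  · refine DifferentiableOn.fun_finsetProd fun i _ => ?_
    exact (mobius_diff (h i)).const_mul _

theorem tm_operator {a u : ℕ → ℂ} {ρ : ℝ} (hρ0 : 0 ≤ ρ) (hρ : ρ < 1) (ha : ∀ n, ‖a n‖ ≤ ρ) (hu : ∀ n, ‖u n‖ = 1)
    {β : ℕ → ℝ} (hβ : Good β) (hs : Slow β) :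
    ∃ W : H2 ≃L[ℂ] H2, ∀ k, ∀ z ∈ unitDisk, repFun β (W (sg k)) z = TM a u k z / (β k : ℂ) := by
  have had : ∀ n, a n ∈ unitDisk := fun n => mem_unitDisk.2 ((ha n).trans_lt hρ)
  obtain ⟨b, hb⟩ := tm_basis had hu (by
    intro z hz
    obtain ⟨μ, h0, h1, h⟩ := mobius_unif hρ (mem_unitDisk.1 hz) (norm_nonneg z) hρ0
    refine squeeze_zero (fun n => Finset.prod_nonneg fun _ _ => norm_nonneg _) (fun n => ?_)
      (tendsto_pow_atTop_nhds_zero_of_lt_one h0.le h1)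
    calc _ ≤ ∏ i ∈ Finset.range n, μ :=
          Finset.prod_le_prod (fun _ _ => norm_nonneg _) fun i _ => h _ _ (ha i) le_rfl
      _ = _ := by simp)
  set R := 2 / (1 + ρ) with hR
  have hR1 : 1 < R := by rw [hR, lt_div_iff₀ (by linarith)]; linarith
  have hρR : ρ * R < 1 := by rw [hR, mul_div_assoc', div_lt_one (by linarith)]; linarith
  have hlt : ∀ n, ∀ z ∈ Metric.closedBall (0:ℂ) R, ‖a n‖ * ‖z‖ < 1 := by
    intro n z hz
    have hz : ‖z‖ ≤ R := by simpa using hz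
    exact (mul_le_mul (ha n) hz (norm_nonneg _) hρ0).trans_lt hρR
  have hd : ∀ n, DifferentiableOn ℂ (TM a u n) (Metric.closedBall 0 R) := tm_diff hlt
  have hbc : ∀ k n, b k n = tc (TM a u k) n := by
    intro k n
    have hA : AnalyticOnClosedDisk (TM a u k) :=
      analyticOnClosedDisk_of_diff hR1 ((hd k).mono Metric.ball_subset_closedBall)
    have : b k = ofFun hA good_one := repFun_inj good_one fun z hz => by
      rw [hb k z hz, repFun_ofFun hA good_one hz]
    rw [this]; simp [ofFun]
  obtain ⟨μ, m0, m1, hμ⟩ := mobius_unif (r := 1 / 2) hρ (by norm_num) (by norm_num) hρ0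
  have hcone : Cone fun n k => b k n := by
    refine cone_of_bounds (C₁ := (1 - ρ * R)⁻¹) (A₁ := (1 + R) / (1 - ρ * R)) (r₁ := R⁻¹)
      (C₂ := (1 - ρ * (1/2))⁻¹) (A₂ := 2) (r₂ := μ) ?_ (by positivity) (inv_lt_one_of_one_lt₀ hR1) (by norm_num) m0 m1 ?_ ?_
    · rw [le_div_iff₀ (by linarith)]
      nlinarith
    · intro n k
      rw [hbc]
      refine (tc_bound (by linarith) (hd k) (C := (1 - ρ * R)⁻¹ * ((1 + R) / (1 - ρ * R)) ^ k) (fun z hz => ?_) n).trans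
        (le_of_eq ?_)
      · have hden : ∀ n, 1 - ρ * R ≤ ‖1 - (starRingEnd ℂ) (a n) * z‖ := fun n => den_lower (ha n) hz.le
        refine tm_bound (ρ := ρ) hu (div_nonneg (by linarith) (by linarith)) (by linarith) hden (fun n => ?_) k
        rw [mobius, norm_div]
        apply div_le_div₀ (by linarith) _ (by linarith) (hden n)
        refine (norm_sub_le _ _).trans ?_
        linarith [ha n]
      · rw [inv_pow]; ring
    · intro n k
      rw [hbc]
      refine (tc_bound (R := 1/2) (by norm_num) ((hd k).mono (Metric.closedBall_subset_closedBall (by linarith)))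
        (C := (1 - ρ * (1/2))⁻¹ * μ ^ k) (fun z hz => ?_) n).trans (le_of_eq ?_)
      · exact tm_bound (ρ := ρ) hu m0.le (by linarith) (fun n => den_lower (ha n) hz.le)
          (fun n => hμ _ _ (ha n) hz.le) k
      · rw [one_div, inv_pow, div_inv_eq_mul]; ring
  let V : H2 →L[ℂ] H2 := (b.repr.symm.toContinuousLinearEquiv : H2 →L[ℂ] H2)
  let V' : H2 →L[ℂ] H2 := (b.repr.toContinuousLinearEquiv : H2 →L[ℂ] H2)
  have hV : ∀ k, V (sg k) = b k := fun k => b.repr_symm_single k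
  have hVV' : ∀ x, V (V' x) = x := fun x => b.repr.symm_apply_apply x
  have hV'V : ∀ x, V' (V x) = x := fun x => b.repr.apply_symm_apply x
  have hV' : ∀ k n, V' (sg k) n = (starRingEnd ℂ) (b n k) := by
    intro k n
    have : V' (sg k) n = inner ℂ (b n) (sg k) := b.repr_apply_apply (sg k) n
    rw [this, sg, lp.inner_single_right]
    simp
  obtain ⟨W, hW⟩ := transfer hβ hs V (by simpa only [hV] using hcone)
  obtain ⟨W', hW'⟩ := transfer hβ hs V' (by simpa only [hV'] using hcone.symm)
  have hβne : ∀ k, (β k : ℂ) ≠ 0 := fun k => by exact_mod_cast (hβ.pos k).ne'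
  have hsg : ∀ k n, sg k n = (β n : ℂ) * ((β k : ℂ)⁻¹ • sg k : H2) n := by
    intro k n
    rw [lp.coeFn_smul, Pi.smul_apply, smul_eq_mul, sg_apply]
    split_ifs with h
    · subst h; field_simp [hβne n]
    · simp
  have hcomp : ∀ x, W (W' x) = x := by
    have : W.comp W' = ContinuousLinearMap.id ℂ H2 := clm_ext_single fun k => by
      ext n
      have := hW (W' (sg k)) (V' ((β k : ℂ)⁻¹ • sg k)) (fun j => hW' _ _ (hsg k) j) n
      rw [hVV', ← hsg] at this
      exact this
    exact fun x => congrArg (fun T : H2 →L[ℂ] H2 => T x) this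
  have hcomp' : ∀ x, W' (W x) = x := by
    have : W'.comp W = ContinuousLinearMap.id ℂ H2 := clm_ext_single fun k => by
      ext n
      have := hW' (W (sg k)) (V ((β k : ℂ)⁻¹ • sg k)) (fun j => hW _ _ (hsg k) j) n
      rw [hV'V, ← hsg] at this
      exact this
    exact fun x => congrArg (fun T : H2 →L[ℂ] H2 => T x) this
  refine ⟨ContinuousLinearEquiv.equivOfInverse W W' hcomp' hcomp, fun k z hz => ?_⟩
  rw [ContinuousLinearEquiv.equivOfInverse_apply, ← hb k z hz, repFun, repFun, ← tsum_div_const]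
  congr 1
  ext n
  rw [hW _ _ (hsg k) n, map_smul, hV, lp.coeFn_smul, Pi.smul_apply, smul_eq_mul]
  have h1 := hβne n
  have h2 := hβne k
  field_simp
  simp

theorem blaschke_operator {m : ℕ} (hm : 0 < m) {B : ℂ → ℂ} (hB : IsBlaschke m B)
    {β : ℕ → ℝ} (hβ : Good β) (hs : Slow β) :
    ∃ (W : H2 ≃L[ℂ] H2) (E : ℕ → ℂ → ℂ), (∀ k z, E (k + m) z = B z * E k z) ∧
      ∀ k, ∀ z ∈ unitDisk, repFun β (W (sg k)) z = E k z / (β k : ℂ) := by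
  obtain ⟨θ, zs, hzs, hBf⟩ := hB
  let a : ℕ → ℂ := fun n => zs ⟨n % m, Nat.mod_lt n hm⟩
  let u : ℕ → ℂ := fun n => if n % m = 0 then Complex.exp (θ * Complex.I) else 1
  have hu : ∀ n, ‖u n‖ = 1 := by
    intro n
    simp only [u]
    split_ifs
    · exact Complex.norm_exp_ofReal_mul_I θ
    · simp
  obtain ⟨ρ, hρ0, hρ1, hρ⟩ : ∃ ρ : ℝ, 0 ≤ ρ ∧ ρ < 1 ∧ ∀ j, ‖zs j‖ ≤ ρ := by
    haveI : Nonempty (Fin m) := ⟨⟨0, hm⟩⟩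
    obtain ⟨i, hi⟩ := Finite.exists_max fun j => ‖zs j‖
    exact ⟨‖zs i‖, norm_nonneg _, mem_unitDisk.1 (hzs i), hi⟩
  obtain ⟨W, hW⟩ := tm_operator (a := a) (u := u) hρ0 hρ1 (fun n => hρ _) hu hβ hs
  refine ⟨W, TM a u, fun k z => ?_, hW⟩
  have ha : ∀ n, a (m + n) = a n := fun n => by simp [a]
  have hu' : ∀ n, u (m + n) = u n := fun n => by simp [u]
  have hprod : ∏ i ∈ Finset.range m, (u i * mobius (a i) z) = B z := by
    rw [Finset.prod_mul_distrib, hBf]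
    congr 1
    · rw [Finset.prod_eq_single 0]
      · simp [u]
      · intro i hi h0
        simp only [u]
        rw [if_neg]
        rw [Nat.mod_eq_of_lt (Finset.mem_range.1 hi)]; exact h0
      · intro h; exact absurd (Finset.mem_range.2 hm) h
    · rw [Finset.prod_range]
      refine Finset.prod_congr rfl fun i _ => ?_
      simp [a, Nat.mod_eq_of_lt i.2]
  rw [add_comm, TM, TM, Finset.prod_range_add, hprod, ha]
  simp only [ha, hu']
  ring

theorem blaschke_le_one {m : ℕ} {B : ℂ → ℂ} (hB : IsBlaschke m B) {z : ℂ} (hz : z ∈ unitDisk) : ‖B z‖ ≤ 1 := by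
  obtain ⟨θ, zs, hzs, hBf⟩ := hB
  rw [hBf, norm_mul, Complex.norm_exp_ofReal_mul_I, one_mul, norm_prod]
  exact Finset.prod_le_one (fun _ _ => norm_nonneg _) fun j _ => (mobius_norm_lt (hzs j) hz).le

theorem exists_yk {m : ℕ} (hm : 0 < m) {h : ℂ → ℂ} (hh : AnalyticOnClosedDisk h) {β : ℕ → ℝ} (hβ : Good β) (k : ℕ) :
    ∃ y : H2, HasSum (fun l => (tc h l * (β (k + l * m) : ℂ)) • sg (k + l * m)) y := by
  obtain ⟨C, r, h0, h1, hC⟩ := hh.tc_decay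
  have hm' : (1:ℝ) ≤ m := by exact_mod_cast hm
  set s := 1 - (1 - r) / m with hs
  have hq : (1 - r) / m ≤ 1 - r := div_le_self (by linarith) hm'
  have hq' : 0 < (1 - r) / m := div_pos (by linarith) (by linarith)
  have s0 : 0 < s := by rw [hs]; linarith
  have s1 : s < 1 := by rw [hs]; linarith
  have hr : r ≤ s ^ m := by
    have := one_add_mul_le_pow (a := -((1 - r) / m)) (by linarith) m
    have e : 1 + (m:ℝ) * (-((1 - r) / m)) = r := by field_simp; ring
    rw [e] at this
    rw [hs, sub_eq_add_neg]; exact this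
  have hinj : Function.Injective fun l : ℕ => k + l * m := fun x y hxy => by
    simp only at hxy
    exact Nat.eq_of_mul_eq_mul_right hm (by omega)
  have hsum := ((hβ.smul s s0 s1).comp_injective hinj).mul_left (C / s ^ k)
  have hS : Summable (fun l => (tc h l * (β (k + l * m) : ℂ)) • sg (k + l * m)) := by
    refine Summable.of_norm_bounded hsum fun l => ?_
    have hC0 : 0 ≤ C := by
      have := (norm_nonneg _).trans (hC 0); simpa using this
    have hb := hβ.pos (k + l * m)
    have e1 : ‖sg (k + l * m)‖ = 1 := by rw [sg, lp.norm_single (by norm_num)]; simp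
    rw [norm_smul, e1, mul_one, norm_mul, Complex.norm_real, Real.norm_of_nonneg hb.le]
    simp only [Function.comp]
    calc ‖tc h l‖ * β (k + l * m) ≤ (C * (s ^ m) ^ l) * β (k + l * m) := by
          gcongr
          exact (hC l).trans (by gcongr)
      _ = _ := by
          rw [pow_add, ← pow_mul, mul_comm m l]
          have : s ^ k ≠ 0 := by positivity
          field_simp
  exact ⟨_, hS.hasSum⟩

theorem sufficiency {β : ℕ → ℝ} (hβ : Good β) (hs : Slow β) {f₁ f₂ : ℂ → ℂ} {T₁ T₂ : H2 →L[ℂ] H2}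
    (hT₁ : RepMul β f₁ T₁) (hT₂ : RepMul β f₂ T₂) {m : ℕ} {B₁ B₂ h : ℂ → ℂ} (hm : 0 < m)
    (hB₁ : IsBlaschke m B₁) (hB₂ : IsBlaschke m B₂) (hh : AnalyticOnClosedDisk h)
    (e₁ : ∀ z ∈ unitDisk, f₁ z = h (B₁ z)) (e₂ : ∀ z ∈ unitDisk, f₂ z = h (B₂ z)) :
    ∃ X : H2 ≃L[ℂ] H2, ∀ a : H2, X (T₁ a) = T₂ (X a) := by
  choose y hy using exists_yk hm hh hβ
  have hβne : ∀ k, (β k : ℂ) ≠ 0 := fun k => by exact_mod_cast (hβ.pos k).ne'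
  have key : ∀ {f : ℂ → ℂ} {T : H2 →L[ℂ] H2} {B : ℂ → ℂ}, RepMul β f T → IsBlaschke m B →
      (∀ z ∈ unitDisk, f z = h (B z)) →
      ∃ W : H2 ≃L[ℂ] H2, ∀ k, T (W (sg k)) = W ((β k : ℂ)⁻¹ • y k) := by
    intro f T B hT hB e
    obtain ⟨W, E, hE, hW⟩ := blaschke_operator hm hB hβ hs
    have hE' : ∀ k l z, E (k + l * m) z = B z ^ l * E k z := by
      intro k l z
      induction l with
      | zero => simp
      | succ l ih => rw [add_mul, one_mul, ← add_assoc, hE, ih]; ring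
    refine ⟨W, fun k => repFun_inj hβ fun z hz => ?_⟩
    rw [hT _ z hz, hW k z hz, map_smul, repFun_smul hβ hz]
    have h1 := (hy k).mapL ((ev hβ hz).comp (W : H2 →L[ℂ] H2))
    simp only [ContinuousLinearMap.comp_apply, map_smul, ContinuousLinearEquiv.coe_coe, ev_apply, hW _ z hz,
      hE', smul_eq_mul] at h1
    obtain ⟨R, hR, hA⟩ := hh.exists_radius
    have h2 := (tc_hasSum (hA.differentiableOn.mono Metric.ball_subset_closedBall)
      ((blaschke_le_one hB hz).trans_lt hR)).mul_right (E k z)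
    rw [← e z hz] at h2
    have h3 := h1.unique (h2.congr_fun fun l => by
      have := hβne (k + l * m)
      field_simp)
    rw [h3]
    field_simp
  obtain ⟨W₁, hW₁⟩ := key hT₁ hB₁ e₁
  obtain ⟨W₂, hW₂⟩ := key hT₂ hB₂ e₂
  refine ⟨W₁.symm.trans W₂, fun a => ?_⟩
  have : ((W₂ : H2 →L[ℂ] H2).comp (W₁.symm : H2 →L[ℂ] H2)).comp (T₁.comp (W₁ : H2 →L[ℂ] H2)) =
      T₂.comp (W₂ : H2 →L[ℂ] H2) := clm_ext_single fun k => by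
    simp only [ContinuousLinearMap.comp_apply, ContinuousLinearEquiv.coe_coe]
    rw [hW₁, hW₂, W₁.symm_apply_apply]
  have h2 := congrArg (fun T : H2 →L[ℂ] H2 => T (W₁.symm a)) this
  simpa using h2
/-! ### Generic points -/

theorem aocd_iff {f : ℂ → ℂ} :
    AnalyticOnClosedDisk f ↔ ∀ z ∈ Metric.closedBall (0:ℂ) 1, AnalyticAt ℂ f z := by
  constructor
  · rintro ⟨U, _, h, hf⟩ z hz
    exact hf z (h hz)
  · intro h
    exact ⟨{x | AnalyticAt ℂ f x}, isOpen_analyticAt ℂ f, h, fun z hz => hz⟩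

theorem disk_sub {z : ℂ} (hz : z ∈ unitDisk) : z ∈ Metric.closedBall (0:ℂ) 1 :=
  Metric.ball_subset_closedBall hz

theorem AnalyticAt.dslope' {f : ℂ → ℂ} {z : ℂ} (h : AnalyticAt ℂ f z) : AnalyticAt ℂ (dslope f z) z := by
  obtain ⟨p, hp⟩ := h
  exact ⟨_, hp.has_fpower_series_dslope_fslope⟩

theorem poly_factor {f : ℂ → ℂ} (hf : AnalyticOnClosedDisk f) (l : ℂ)
    (h1 : ∀ z, ‖z‖ = 1 → f z ≠ l) (h2 : ∀ z ∈ unitDisk, f z = l → deriv f z ≠ 0) :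
    ∃ Z : Finset ℂ, (∀ ζ, ζ ∈ Z ↔ ζ ∈ unitDisk ∧ f ζ = l) ∧
      ∀ p, AnalyticOnClosedDisk p → (∀ ζ ∈ Z, p ζ = 0) →
        ∃ v, AnalyticOnClosedDisk v ∧ ∀ z ∈ unitDisk, p z = (f z - l) * v z := by
  have hA := aocd_iff.1 hf
  have hfin : {z | z ∈ unitDisk ∧ f z = l}.Finite := by
    by_contra hinf
    obtain ⟨x, hxK, hx⟩ := Set.Infinite.exists_accPt_of_subset_isCompact hinf
      (isCompact_closedBall (0:ℂ) 1) (fun z hz => disk_sub hz.1)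
    rw [accPt_iff_frequently_nhdsNE] at hx
    have hxl : f x = l := by
      by_contra hne
      have : ∀ᶠ z in 𝓝 x, f z ≠ l := (hA x hxK).continuousAt.eventually_ne hne
      exact hx ((this.filter_mono nhdsWithin_le_nhds).mono fun z hz hz' => hz hz'.2)
    have hxD : x ∈ unitDisk := by
      rw [mem_unitDisk]
      refine lt_of_le_of_ne (by simpa using hxK) fun e => h1 x e hxl
    have := (hA x hxK).differentiableAt.hasDerivAt.eventually_ne (c := l) (h2 x hxD hxl)
    exact hx (this.mono fun z hz hz' => hz hz'.2)
  refine ⟨hfin.toFinset, fun ζ => by simp, fun p hp hpz => ?_⟩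
  classical
  have hpA := aocd_iff.1 hp
  refine ⟨fun z => if z ∈ hfin.toFinset then deriv p z / deriv f z else p z / (f z - l),
    aocd_iff.2 fun z hz => ?_, fun z hz => ?_⟩
  · by_cases hzZ : z ∈ hfin.toFinset
    · have hz' : z ∈ unitDisk ∧ f z = l := by simpa using hzZ
      have hd : AnalyticAt ℂ (fun x => dslope p z x / dslope f z x) z := by
        refine (hpA z hz).dslope'.div (hA z hz).dslope' ?_
        rw [dslope_same]; exact h2 z hz'.1 hz'.2
      refine hd.congr ?_
      have hev : ∀ᶠ x in 𝓝 z, x ∉ (hfin.toFinset.erase z : Finset ℂ) := by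
        have := (hfin.toFinset.erase z).finite_toSet.isClosed.isOpen_compl.mem_nhds
          (x := z) (by simp)
        filter_upwards [this] with x hx using hx
      filter_upwards [hev] with x hx
      by_cases hxz : x = z
      · subst hxz; rw [if_pos hzZ, dslope_same, dslope_same]
      · have hxZ : x ∉ hfin.toFinset := fun h => hx (Finset.mem_erase.2 ⟨hxz, h⟩)
        rw [if_neg hxZ, dslope_of_ne _ hxz, dslope_of_ne _ hxz, slope_def_field, slope_def_field,
          hpz z hzZ, hz'.2, sub_zero, div_div_div_cancel_right₀ (sub_ne_zero.2 hxz)]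
    · have hne : f z - l ≠ 0 := by
        intro h
        rw [sub_eq_zero] at h
        apply hzZ
        have : ‖z‖ ≠ 1 := fun e => h1 z e h
        have hz1 : ‖z‖ ≤ 1 := by simpa using hz
        simpa using ⟨mem_unitDisk.2 (lt_of_le_of_ne hz1 this), h⟩
      have hd : AnalyticAt ℂ (fun x => p x / (f x - l)) z :=
        (hpA z hz).div ((hA z hz).sub analyticAt_const) hne
      refine hd.congr ?_
      have hev := hfin.toFinset.finite_toSet.isClosed.isOpen_compl.mem_nhds
          (x := z) hzZ
      filter_upwards [hev] with x hx
      rw [if_neg (by simpa using hx)]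
  · by_cases hzZ : z ∈ hfin.toFinset
    · have hz' : z ∈ unitDisk ∧ f z = l := by simpa using hzZ
      simp [hz'.2, hpz z hzZ]
    · simp only [if_neg hzZ]
      rw [mul_div_cancel₀]
      rw [sub_ne_zero]
      intro h
      exact hzZ (by simpa using ⟨hz, h⟩)

open MeasureTheory in
theorem null_zeros {f u : ℂ → ℂ} (hf : DifferentiableOn ℂ f unitDisk)
    (hu : DifferentiableOn ℂ u unitDisk) (h : ∃ z ∈ unitDisk, u z ≠ 0) :
    volume (f '' {z | z ∈ unitDisk ∧ u z = 0}) = 0 := by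
  apply addHaar_image_eq_zero_of_differentiableOn_of_addHaar_eq_zero
  · exact (hf.mono fun z hz => hz.1).restrictScalars ℝ
  · apply measure_null_of_locally_null
    rintro x ⟨hx, hx0⟩
    refine ⟨{x}, ?_, by simp⟩
    have hev : ∀ᶠ z in 𝓝[≠] x, u z ≠ 0 := by
      by_contra hc
      have := (hu.analyticOnNhd unitDisk_open).eqOn_zero_of_preconnected_of_frequently_eq_zero
        isPreconnected_unitDisk hx hc
      obtain ⟨z, hz, hz0⟩ := h
      exact hz0 (this hz)
    rw [eventually_nhdsWithin_iff] at hev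
    rw [mem_nhdsWithin_iff_eventually]
    filter_upwards [hev] with z hz hz'
    by_contra hne
    exact hz hne hz'.2

open MeasureTheory in
theorem null_sphere {f : ℂ → ℂ} (hf : AnalyticOnClosedDisk f) :
    volume (f '' Metric.sphere 0 1) = 0 := by
  apply addHaar_image_eq_zero_of_differentiableOn_of_addHaar_eq_zero
  · intro z hz
    exact ((aocd_iff.1 hf z (Metric.sphere_subset_closedBall hz)).differentiableAt.restrictScalars
      ℝ).differentiableWithinAt
  · exact Measure.addHaar_sphere volume (0:ℂ) 1

open MeasureTheory in
theorem dense_avoid {f : ℂ → ℂ} (hf : DifferentiableOn ℂ f unitDisk)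
    (hnc : ¬ ∃ c, ∀ z ∈ unitDisk, f z = c) {N : Set ℂ} (hN : volume N = 0)
    {W : Set ℂ} (hW : IsOpen W) (hWs : W ⊆ unitDisk) (hne : W.Nonempty) : ∃ α ∈ W, f α ∉ N := by
  by_contra! h
  have ho := ((hf.analyticOnNhd unitDisk_open).is_constant_or_isOpen
    isPreconnected_unitDisk).resolve_left hnc W hWs hW
  have : volume (f '' W) = 0 := measure_mono_null (by rintro _ ⟨z, hz, rfl⟩; exact h z hz) hN
  exact (ho.measure_pos volume (hne.image f)).ne' this
/-! ### Intertwiners and point relations -/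

structure Sys (β : ℕ → ℝ) (f : Bool → ℂ → ℂ) (T : Bool → H2 →L[ℂ] H2) : Prop where
  good : Good β
  hf : ∀ i, AnalyticOnClosedDisk (f i)
  hT : ∀ i, RepMul β (f i) (T i)
  hnc : ∀ i, ¬ ∃ c, ∀ z ∈ unitDisk, f i z = c
  hX : ∀ i j, ∃ X : H2 ≃L[ℂ] H2, ∀ a, X (T j a) = T i (X a)

def Itw (T : Bool → H2 →L[ℂ] H2) (i j : Bool) (Y : H2 →L[ℂ] H2) : Prop := ∀ a, Y (T j a) = T i (Y a)

def SS (β : ℕ → ℝ) (T : Bool → H2 →L[ℂ] H2) (i j : Bool) (α : ℂ) : Set ℂ :=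
  {ζ | ζ ∈ unitDisk ∧ ∃ Y, Itw T i j Y ∧ ∀ g, repFun β (Y g) α = repFun β g ζ}

def Bad0 (f : Bool → ℂ → ℂ) : Set ℂ :=
  ⋃ i, (f i '' Metric.sphere 0 1 ∪ f i '' {z | z ∈ unitDisk ∧ deriv (f i) z = 0})

theorem aocd_poly (p : Polynomial ℂ) : AnalyticOnClosedDisk (fun z => p.eval z) :=
  aocd_iff.2 fun z _ => (p.differentiable.analyticAt z)

theorem exists_poly_mul {β : ℕ → ℝ} (hβ : Good β) (p : Polynomial ℂ) :
    ∃ S : H2 →L[ℂ] H2, ∀ a, ∀ z ∈ unitDisk, repFun β (S a) z = p.eval z * repFun β a z := by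
  obtain ⟨S, hS⟩ := exists_shift hβ
  induction p using Polynomial.induction_on' with
  | add p q hp hq =>
    obtain ⟨P, hP⟩ := hp
    obtain ⟨Q, hQ⟩ := hq
    refine ⟨P + Q, fun a z hz => ?_⟩
    rw [ContinuousLinearMap.add_apply, repFun_add hβ hz, hP a z hz, hQ a z hz, Polynomial.eval_add,
      add_mul]
  | monomial n c =>
    refine ⟨c • S ^ n, fun a z hz => ?_⟩
    rw [ContinuousLinearMap.smul_apply, repFun_smul hβ hz, Polynomial.eval_monomial, mul_assoc]
    congr 1
    induction n with
    | zero => simp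
    | succ n ih => rw [pow_succ', ContinuousLinearMap.mul_apply, hS _ z hz, ih, pow_succ']; ring

theorem repFun_sg {β : ℕ → ℝ} (k : ℕ) (z : ℂ) :
    repFun β (sg k) z = (β k : ℂ)⁻¹ * z ^ k := by
  unfold repFun
  rw [tsum_eq_single k]
  · rw [sg_apply]; simp
  · intro n hn; rw [sg_apply, if_neg hn]; simp

theorem repFun_sum {β : ℕ → ℝ} (hβ : Good β) {z : ℂ} (hz : z ∈ unitDisk) {ι : Type*} (s : Finset ι)
    (a : ι → H2) : repFun β (∑ i ∈ s, a i) z = ∑ i ∈ s, repFun β (a i) z := by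
  simp only [← ev_apply hβ hz, map_sum]

theorem repFun_sub {β : ℕ → ℝ} (hβ : Good β) {z : ℂ} (hz : z ∈ unitDisk) (a b : H2) :
    repFun β (a - b) z = repFun β a z - repFun β b z := by
  simp only [← ev_apply hβ hz, map_sub]

theorem Itw.comp {T : Bool → H2 →L[ℂ] H2} {i j k : Bool} {Y Y' : H2 →L[ℂ] H2}
    (h : Itw T i j Y) (h' : Itw T j k Y') : Itw T i k (Y.comp Y') := by
  intro a
  simp only [ContinuousLinearMap.comp_apply]
  rw [h' a, h]

namespace Sys

variable {β : ℕ → ℝ} {f : Bool → ℂ → ℂ} {T : Bool → H2 →L[ℂ] H2}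

theorem SS_self (i : Bool) {α : ℂ} (hα : α ∈ unitDisk) : α ∈ SS β T i i α :=
  ⟨hα, ContinuousLinearMap.id ℂ H2, fun _ => rfl, fun _ => rfl⟩

theorem SS_trans {i j k : Bool} {α ζ η : ℂ} (h : ζ ∈ SS β T i j α) (h' : η ∈ SS β T j k ζ) :
    η ∈ SS β T i k α := by
  obtain ⟨_, Y, hY, hY'⟩ := h
  obtain ⟨hη, Y2, h2, h2'⟩ := h'
  exact ⟨hη, Y.comp Y2, hY.comp h2, fun g => by
    rw [ContinuousLinearMap.comp_apply, hY', h2']⟩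

theorem SS_f (h : Sys β f T) {i j : Bool} {α ζ : ℂ} (hα : α ∈ unitDisk) (hζ : ζ ∈ SS β T i j α) :
    f j ζ = f i α := by
  obtain ⟨hz, Y, hY, hY'⟩ := hζ
  obtain ⟨e, he⟩ := exists_ofFun (aocd_poly 1) h.good
  simp only [Polynomial.eval_one] at he
  have h1 := hY' (T j e)
  rw [h.hT j e ζ hz, he ζ hz, hY e, h.hT i _ α hα, hY' e, he ζ hz] at h1
  simpa using h1.symm

theorem rep_points (h : Sys β f T) (i j : Bool) {α : ℂ} (hα : α ∈ unitDisk) (hb : f i α ∉ Bad0 f) :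
    ∃ Sf : Finset ℂ, (∀ ζ, ζ ∈ Sf ↔ ζ ∈ SS β T i j α) ∧
      ∀ Y, Itw T i j Y → ∃ c : ℂ → ℂ, ∀ g, repFun β (Y g) α = ∑ ζ ∈ Sf, c ζ * repFun β g ζ := by
  classical
  have hβ := h.good
  simp only [Bad0, Set.mem_iUnion, Set.mem_union, not_exists, not_or] at hb
  obtain ⟨Z, hZ, hfac⟩ := poly_factor (h.hf j) (f i α)
    (fun z hz e => (hb j).1 ⟨z, by simpa using hz, e⟩)
    (fun z hz e e' => (hb j).2 ⟨z, ⟨hz, e'⟩, e⟩)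
  have hL : ∀ ζ : ℂ, ∃ a : H2, ∀ z ∈ unitDisk, repFun β a z = (Lagrange.basis Z id ζ).eval z :=
    fun ζ => exists_ofFun (aocd_poly _) hβ
  choose L hL using hL
  have hbas : ∀ ζ ∈ Z, ∀ ζ' ∈ Z, (Lagrange.basis Z id ζ).eval ζ' = if ζ = ζ' then 1 else 0 := by
    intro ζ hζ ζ' hζ'
    split_ifs with e
    · subst e
      exact Lagrange.eval_basis_self (v := id) Function.injective_id.injOn hζ
    · exact Lagrange.eval_basis_of_ne (v := id) e hζ'
  have key : ∀ Y, Itw T i j Y → ∀ p : Polynomial ℂ, ∀ g : H2,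
      (∀ z ∈ unitDisk, repFun β g z = p.eval z) →
      repFun β (Y g) α = ∑ ζ ∈ Z, repFun β (Y (L ζ)) α * repFun β g ζ := by
    intro Y hY p g hg
    obtain ⟨v, hv, hv'⟩ := hfac (fun z => (p - ∑ ζ ∈ Z, Polynomial.C (p.eval ζ) * Lagrange.basis Z id ζ).eval z)
      (aocd_poly _) (fun ζ hζ => by
        simp only [Polynomial.eval_sub, Polynomial.eval_finsetSum, Polynomial.eval_mul, Polynomial.eval_C]
        rw [Finset.sum_congr rfl fun x hx => by rw [hbas x hx ζ hζ]]
        simp [hζ])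
    obtain ⟨a, ha⟩ := exists_ofFun hv hβ
    have e : g - ∑ ζ ∈ Z, p.eval ζ • L ζ = T j a - f i α • a := by
      apply repFun_inj hβ
      intro z hz
      rw [repFun_sub hβ hz, repFun_sub hβ hz, repFun_sum hβ hz, repFun_smul hβ hz, h.hT j a z hz, ha z hz,
        ← sub_mul, ← hv' z hz, hg z hz]
      simp only [Polynomial.eval_sub, Polynomial.eval_finsetSum, Polynomial.eval_mul, Polynomial.eval_C]
      congr 1
      refine Finset.sum_congr rfl fun x _ => ?_
      rw [repFun_smul hβ hz, hL x z hz]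
    have e2 := congrArg (fun x => repFun β (Y x) α) e
    simp only [map_sub, map_sum, map_smul] at e2
    rw [repFun_sub hβ hα, repFun_sub hβ hα, repFun_sum hβ hα, repFun_smul hβ hα, hY a, h.hT i _ α hα,
      sub_self, sub_eq_zero] at e2
    rw [e2]
    refine Finset.sum_congr rfl fun x hx => ?_
    rw [repFun_smul hβ hα, hg x ((hZ x).1 hx).1, mul_comm]
  have key2 : ∀ Y, Itw T i j Y → ∀ g : H2,
      repFun β (Y g) α = ∑ ζ ∈ Z, repFun β (Y (L ζ)) α * repFun β g ζ := by
    intro Y hY g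
    have : (ev hβ hα).comp Y = ∑ ζ ∈ Z.attach, repFun β (Y (L ζ)) α • ev hβ ((hZ ζ).1 ζ.2).1 := by
      apply clm_ext_single
      intro k
      rw [ContinuousLinearMap.comp_apply, ev_apply]
      rw [key Y hY (Polynomial.C ((β k : ℂ)⁻¹) * Polynomial.X ^ k) (lp.single 2 k (1:ℂ)) (fun z _ => by
        rw [show lp.single 2 k (1:ℂ) = sg k from rfl, repFun_sg]; simp)]
      rw [ContinuousLinearMap.sum_apply, ← Finset.sum_attach]
      refine Finset.sum_congr rfl fun x _ => ?_
      rw [ContinuousLinearMap.smul_apply, ev_apply, smul_eq_mul]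
    have e := congrArg (fun F => F g) this
    simp only [ContinuousLinearMap.comp_apply, ev_apply, ContinuousLinearMap.sum_apply,
      ContinuousLinearMap.smul_apply, smul_eq_mul] at e
    rw [e, ← Finset.sum_attach Z]
  have hsub : ∀ Y, Itw T i j Y → ∀ ζ ∈ Z, repFun β (Y (L ζ)) α ≠ 0 → ζ ∈ SS β T i j α := by
    intro Y hY ζ hζ h0
    obtain ⟨M, hM⟩ := exists_poly_mul hβ (Lagrange.basis Z id ζ)
    refine ⟨((hZ ζ).1 hζ).1, (repFun β (Y (L ζ)) α)⁻¹ • Y.comp M, fun a => ?_, fun g => ?_⟩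
    · have : M (T j a) = T j (M a) := by
        apply repFun_inj hβ
        intro z hz
        rw [hM _ z hz, h.hT j _ z hz, h.hT j _ z hz, hM _ z hz]; ring
      simp only [ContinuousLinearMap.smul_apply, ContinuousLinearMap.comp_apply, map_smul]
      rw [this, hY]
    · rw [ContinuousLinearMap.smul_apply, ContinuousLinearMap.comp_apply, repFun_smul hβ hα, key2 Y hY (M g),
        Finset.sum_eq_single ζ, hM _ _ ((hZ ζ).1 hζ).1, hbas ζ hζ ζ hζ, if_pos rfl, one_mul,
        inv_mul_cancel_left₀ h0]
      · intro x hx hne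
        rw [hM _ _ ((hZ x).1 hx).1, hbas ζ hζ x hx, if_neg hne.symm]; simp
      · intro hh; exact absurd hζ hh
  refine ⟨Z.filter (· ∈ SS β T i j α), fun ζ => ?_, fun Y hY => ⟨fun ζ => repFun β (Y (L ζ)) α, fun g => ?_⟩⟩
  · rw [Finset.mem_filter, hZ]
    exact ⟨fun hh => hh.2, fun hh => ⟨⟨hh.1, h.SS_f hα hh⟩, hh⟩⟩
  · rw [key2 Y hY, Finset.sum_filter]
    refine Finset.sum_congr rfl fun x hx => ?_
    split_ifs with hh
    · rfl
    · have : repFun β (Y (L x)) α = 0 := by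
        by_contra h0
        exact hh (hsub Y hY x hx h0)
      rw [this, zero_mul]

end Sys
/-! ### Determinants and the generic number of points -/

def Dt (β : ℕ → ℝ) {n : ℕ} (Y : Fin n → H2 →L[ℂ] H2) (g : Fin n → H2) (α : ℂ) : ℂ :=
  Matrix.det (Matrix.of fun a b => repFun β (Y a (g b)) α)

theorem Dt_diff {β : ℕ → ℝ} (hβ : Good β) {n : ℕ} (Y : Fin n → H2 →L[ℂ] H2) (g : Fin n → H2) :
    DifferentiableOn ℂ (Dt β Y g) unitDisk := by
  unfold Dt
  simp only [Matrix.det_apply, Matrix.of_apply]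
  apply DifferentiableOn.fun_sum
  intro σ _
  apply DifferentiableOn.const_smul
  apply DifferentiableOn.fun_finsetProd
  intro i _
  exact repFun_diff hβ _

def Pn (β : ℕ → ℝ) (T : Bool → H2 →L[ℂ] H2) (i j : Bool) (n : ℕ) : Prop :=
  ∃ (Y : Fin n → H2 →L[ℂ] H2) (g : Fin n → H2), (∀ a, Itw T i j (Y a)) ∧ ∃ z ∈ unitDisk, Dt β Y g z ≠ 0

theorem null_iff_union {ι : Type*} [Countable ι] {s : ι → Set ℂ}
    (h : ∀ i, MeasureTheory.volume (s i) = 0) : MeasureTheory.volume (⋃ i, s i) = 0 :=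
  MeasureTheory.measure_iUnion_null h

namespace Sys

variable {β : ℕ → ℝ} {f : Bool → ℂ → ℂ} {T : Bool → H2 →L[ℂ] H2}

theorem le_card (h : Sys β f T) {i j : Bool} {α : ℂ} (hα : α ∈ unitDisk) (hb : f i α ∉ Bad0 f)
    {n : ℕ} {Y : Fin n → H2 →L[ℂ] H2} {g : Fin n → H2} (hY : ∀ a, Itw T i j (Y a))
    (hD : Dt β Y g α ≠ 0) : n ≤ (SS β T i j α).ncard := by
  obtain ⟨Sf, hS, hrep⟩ := h.rep_points i j hα hb
  have e : SS β T i j α = Sf := by ext ζ; simp [hS]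
  rw [e, Set.ncard_coe_finset]
  choose c hc using fun a => hrep (Y a) (hY a)
  have hm : (Matrix.of fun a b => repFun β (Y a (g b)) α : Matrix (Fin n) (Fin n) ℂ) =
      (Matrix.of fun a ζ => c a ζ : Matrix (Fin n) Sf ℂ) * (Matrix.of fun ζ b => repFun β (g b) ζ : Matrix Sf (Fin n) ℂ) := by
    ext a b
    rw [Matrix.mul_apply, Matrix.of_apply, hc a, ← Finset.sum_coe_sort]
    rfl
  have hu := Matrix.rank_of_isUnit _ ((Matrix.isUnit_iff_isUnit_det _).2 (isUnit_iff_ne_zero.2 hD))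
  rw [hm] at hu
  have h1 := Matrix.rank_mul_le_left (Matrix.of fun a ζ => c a ζ : Matrix (Fin n) Sf ℂ)
    (Matrix.of fun ζ b => repFun β (g b) ζ : Matrix Sf (Fin n) ℂ)
  have h2 := Matrix.rank_le_card_width (Matrix.of fun a ζ => c a ζ : Matrix (Fin n) Sf ℂ)
  rw [hu] at h1
  simpa using h1.trans h2

theorem SS_finite (h : Sys β f T) {i j : Bool} {α : ℂ} (hα : α ∈ unitDisk) (hb : f i α ∉ Bad0 f) :
    (SS β T i j α).Finite := by
  obtain ⟨Sf, hS, _⟩ := h.rep_points i j hα hb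
  have e : SS β T i j α = Sf := by ext ζ; simp [hS]
  rw [e]; exact Sf.finite_toSet

theorem exists_D (h : Sys β f T) {i j : Bool} {α : ℂ} (hα : α ∈ unitDisk) (hb : f i α ∉ Bad0 f)
    {n : ℕ} (hn : n ≤ (SS β T i j α).ncard) {g : Fin n → H2}
    (hg : ∀ b, ∀ z ∈ unitDisk, repFun β (g b) z = z ^ (b : ℕ)) :
    ∃ Y : Fin n → H2 →L[ℂ] H2, (∀ a, Itw T i j (Y a)) ∧ Dt β Y g α ≠ 0 := by
  have hfin := h.SS_finite (j := j) hα hb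
  have : Fintype (SS β T i j α) := hfin.fintype
  have hc : Fintype.card (Fin n) ≤ Fintype.card (SS β T i j α) := by
    rw [Fintype.card_fin, ← Nat.card_eq_fintype_card]; exact hn
  obtain ⟨e⟩ := Function.Embedding.nonempty_of_card_le hc
  choose hd Y hY hY' using fun a => (e a).2
  refine ⟨Y, hY, ?_⟩
  have hm : Dt β Y g α = (Matrix.vandermonde fun a => (e a : ℂ)).det := by
    unfold Dt
    congr 1
    ext a b
    rw [Matrix.of_apply, hY', hg b _ (hd a), Matrix.vandermonde_apply]
  rw [hm, Matrix.det_vandermonde_ne_zero_iff]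
  exact Subtype.val_injective.comp e.injective

theorem exists_mono (hβ : Good β) (n : ℕ) :
    ∃ g : Fin n → H2, ∀ b, ∀ z ∈ unitDisk, repFun β (g b) z = z ^ (b : ℕ) := by
  have := fun b : Fin n => exists_ofFun (aocd_poly (Polynomial.X ^ (b : ℕ))) hβ
  choose g hg using this
  exact ⟨g, fun b z hz => by simpa using hg b z hz⟩

theorem null_Bad0 (h : Sys β f T) : MeasureTheory.volume (Bad0 f) = 0 := by
  refine null_iff_union fun i => MeasureTheory.measure_union_null (null_sphere (h.hf i)) ?_
  refine null_zeros (h.hf i).diffOn ((h.hf i).diffOn.deriv unitDisk_open) ?_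
  by_contra! hc
  apply h.hnc i
  refine ⟨f i 0, fun z hz => ?_⟩
  exact unitDisk_open.is_const_of_deriv_eq_zero isPreconnected_unitDisk (h.hf i).diffOn hc hz
    (by simp [unitDisk])

theorem exists_M (h : Sys β f T) (i j : Bool) : ∃ M, Pn β T i j M ∧ ∃ N, MeasureTheory.volume N = 0 ∧
    ∀ α ∈ unitDisk, f i α ∉ Bad0 f → f i α ∉ N → (SS β T i j α).ncard = M := by
  classical
  have hex : ∃ n, ¬ Pn β T i j n := by
    by_contra! hall
    choose Y g hY hD using hall
    have hN : MeasureTheory.volume (Bad0 f ∪ ⋃ n, f i '' {z | z ∈ unitDisk ∧ Dt β (Y n) (g n) z = 0}) = 0 :=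
      MeasureTheory.measure_union_null h.null_Bad0
        (null_iff_union fun n => null_zeros (h.hf i).diffOn (Dt_diff h.good _ _) (hD n))
    obtain ⟨α, hα, hn⟩ := dense_avoid (h.hf i).diffOn (h.hnc i) hN unitDisk_open subset_rfl
      ⟨0, by simp [unitDisk]⟩
    simp only [Set.mem_union, Set.mem_iUnion, not_or, not_exists] at hn
    have := h.le_card (j := j) hα hn.1 (hY ((SS β T i j α).ncard + 1)) (g := g _)
      (fun e => hn.2 _ ⟨α, ⟨hα, e⟩, rfl⟩)
    omega
  have h0 : Pn β T i j 0 := ⟨fun _ => 0, fun _ => 0, fun a => a.elim0, 0, by simp [unitDisk], by simp [Dt]⟩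
  have hpos : Nat.find hex ≠ 0 := fun e => Nat.find_spec hex (by rw [e]; exact h0)
  obtain ⟨M, hM⟩ := Nat.exists_eq_succ_of_ne_zero hpos
  have hPM : Pn β T i j M := by
    have := Nat.find_min hex (m := M) (by omega)
    simpa using this
  refine ⟨M, hPM, ?_⟩
  obtain ⟨Y, g, hY, hD⟩ := hPM
  refine ⟨f i '' {z | z ∈ unitDisk ∧ Dt β Y g z = 0}, null_zeros (h.hf i).diffOn (Dt_diff h.good _ _) hD,
    fun α hα hb hn => le_antisymm ?_ ?_⟩
  · by_contra hlt
    obtain ⟨g', hg'⟩ := exists_mono h.good (M + 1)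
    obtain ⟨Y', hY', hD'⟩ := h.exists_D (i := i) (j := j) hα hb (n := M + 1) (by omega) hg'
    apply Nat.find_spec hex
    rw [hM]
    exact ⟨Y', g', hY', α, hα, hD'⟩
  · exact h.le_card hα hb hY (fun e => hn ⟨α, ⟨hα, e⟩, rfl⟩)

theorem Pn_change (h : Sys β f T) {i j : Bool} (k : Bool) {n : ℕ} (hp : Pn β T i j n) : Pn β T i k n := by
  obtain ⟨Y, g, hY, z, hz, hD⟩ := hp
  obtain ⟨X, hX⟩ := h.hX j k
  refine ⟨fun a => (Y a).comp (X : H2 →L[ℂ] H2), fun b => X.symm (g b), fun a => (hY a).comp hX, z, hz, ?_⟩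
  simpa [Dt] using hD

theorem SS_nonempty (h : Sys β f T) (i j : Bool) {α : ℂ} (hα : α ∈ unitDisk) (hb : f i α ∉ Bad0 f) :
    ∃ ζ, ζ ∈ SS β T i j α := by
  obtain ⟨Sf, hS, hrep⟩ := h.rep_points i j hα hb
  obtain ⟨X, hX⟩ := h.hX i j
  obtain ⟨c, hc⟩ := hrep X hX
  by_contra! hne
  obtain ⟨e, he⟩ := exists_ofFun (aocd_poly 1) h.good
  have := hc (X.symm e)
  rw [Finset.sum_eq_zero fun ζ hζ => absurd ((hS ζ).1 hζ) (hne ζ)] at this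
  simp [he α hα] at this

theorem structure_thm (h : Sys β f T) : ∃ M, 0 < M ∧ ∃ N, MeasureTheory.volume N = 0 ∧ Bad0 f ⊆ N ∧
    ∀ i j, ∀ α ∈ unitDisk, f i α ∉ N → (SS β T i j α).ncard = M := by
  choose M hP N hN hM using h.exists_M
  have hN' : MeasureTheory.volume (Bad0 f ∪ ⋃ i, ⋃ j, N i j) = 0 :=
    MeasureTheory.measure_union_null h.null_Bad0
      (null_iff_union fun i => null_iff_union fun j => hN i j)
  have hM' : ∀ i j, ∀ α ∈ unitDisk, f i α ∉ (Bad0 f ∪ ⋃ i, ⋃ j, N i j) → (SS β T i j α).ncard = M i j := by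
    intro i j α hα hn
    simp only [Set.mem_union, Set.mem_iUnion, not_or, not_exists] at hn
    exact hM i j α hα hn.1 (hn.2 i j)
  have hgen : ∀ i, ∃ α ∈ unitDisk, f i α ∉ (Bad0 f ∪ ⋃ i, ⋃ j, N i j) := fun i =>
    dense_avoid (h.hf i).diffOn (h.hnc i) hN' unitDisk_open subset_rfl ⟨0, by simp [unitDisk]⟩
  have hb : ∀ {x}, x ∉ (Bad0 f ∪ ⋃ i, ⋃ j, N i j) → x ∉ Bad0 f := fun hx hx' => hx (Or.inl hx')
  have h1 : ∀ i j k, M i j ≤ M i k := by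
    intro i j k
    obtain ⟨Y, g, hY, hD⟩ := h.Pn_change k (hP i j)
    have hN2 := MeasureTheory.measure_union_null hN'
      (null_zeros (h.hf i).diffOn (Dt_diff h.good Y g) hD)
    obtain ⟨α, hα, hn⟩ := dense_avoid (h.hf i).diffOn (h.hnc i) hN2 unitDisk_open subset_rfl
      ⟨0, by simp [unitDisk]⟩
    rw [Set.mem_union, not_or] at hn
    rw [← hM' i k α hα hn.1]
    exact h.le_card hα (hb hn.1) hY (fun e => hn.2 ⟨α, ⟨hα, e⟩, rfl⟩)
  have h2 : ∀ i j k, M j k ≤ M i k := by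
    intro i j k
    obtain ⟨α, hα, hn⟩ := hgen i
    obtain ⟨ζ, hζ⟩ := h.SS_nonempty i j hα (hb hn)
    have e := h.SS_f hα hζ
    rw [← hM' i k α hα hn, ← hM' j k ζ hζ.1 (by rwa [e])]
    exact Set.ncard_le_ncard (fun η hη => SS_trans hζ hη) (h.SS_finite hα (hb hn))
  have heq : ∀ i j, M i j = M true true := fun i j =>
    le_antisymm ((h1 i j true).trans (h2 _ _ _)) ((h2 i true true).trans (h1 _ _ _))
  refine ⟨M true true, ?_, _, hN', Set.subset_union_left, fun i j α hα hn => by rw [hM' i j α hα hn, heq]⟩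
  obtain ⟨α, hα, hn⟩ := hgen true
  rw [← hM' true true α hα hn, Set.ncard_pos (h.SS_finite hα (hb hn))]
  exact ⟨α, SS_self true hα⟩

theorem SS_eq (h : Sys β f T) {M : ℕ} {N : Set ℂ} (hB : Bad0 f ⊆ N)
    (hc : ∀ i j, ∀ α ∈ unitDisk, f i α ∉ N → (SS β T i j α).ncard = M) {i j : Bool} (k : Bool) {α ζ : ℂ}
    (hα : α ∈ unitDisk) (hn : f i α ∉ N) (hζ : ζ ∈ SS β T i j α) : SS β T j k ζ = SS β T i k α := by
  have e := h.SS_f hα hζ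
  refine Set.eq_of_subset_of_ncard_le (fun η hη => SS_trans hζ hη) ?_
    (h.SS_finite hα (fun hh => hn (hB hh)))
  rw [hc i k α hα hn, hc j k ζ hζ.1 (by rwa [e])]

theorem SS_symm (h : Sys β f T) {M : ℕ} {N : Set ℂ} (hB : Bad0 f ⊆ N)
    (hc : ∀ i j, ∀ α ∈ unitDisk, f i α ∉ N → (SS β T i j α).ncard = M) {i j : Bool} {α ζ : ℂ}
    (hα : α ∈ unitDisk) (hn : f i α ∉ N) (hζ : ζ ∈ SS β T i j α) : α ∈ SS β T j i ζ := by
  rw [h.SS_eq hB hc i hα hn hζ]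
  exact SS_self i hα

end Sys
/-! ### Blaschke products from intertwiners -/

structure Gdat (β : ℕ → ℝ) (f : Bool → ℂ → ℂ) (T : Bool → H2 →L[ℂ] H2) (M : ℕ) (N : Set ℂ)
    (g : Fin M → H2) (Y : Bool → Bool → Fin M → H2 →L[ℂ] H2) : Prop extends Sys β f T where
  mpos : 0 < M
  null : MeasureTheory.volume N = 0
  sub : Bad0 f ⊆ N
  card : ∀ i j, ∀ α ∈ unitDisk, f i α ∉ N → (SS β T i j α).ncard = M
  mono : ∀ b, ∀ z ∈ unitDisk, repFun β (g b) z = z ^ (b : ℕ)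
  itw : ∀ i j a, Itw T i j (Y i j a)
  dne : ∀ i j, ∀ α ∈ unitDisk, f i α ∉ N → Dt β (Y i j) g α ≠ 0

theorem Sys.exists_gdat {β : ℕ → ℝ} {f : Bool → ℂ → ℂ} {T : Bool → H2 →L[ℂ] H2} (h : Sys β f T) :
    ∃ M N g Y, Gdat β f T M N g Y := by
  obtain ⟨M, hM, N, hN, hB, hc⟩ := h.structure_thm
  obtain ⟨g, hg⟩ := Sys.exists_mono h.good M
  have hY : ∀ i j, ∃ Y : Fin M → H2 →L[ℂ] H2, (∀ a, Itw T i j (Y a)) ∧ ∃ α ∈ unitDisk, Dt β Y g α ≠ 0 := by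
    intro i j
    obtain ⟨α, hα, hn⟩ := dense_avoid (h.hf i).diffOn (h.hnc i) hN unitDisk_open subset_rfl
      ⟨0, by simp [unitDisk]⟩
    obtain ⟨Y, hY, hD⟩ := h.exists_D (i := i) (j := j) hα (fun hh => hn (hB hh)) (hc i j α hα hn).ge hg
    exact ⟨Y, hY, α, hα, hD⟩
  choose Y hY hD using hY
  refine ⟨M, N ∪ ⋃ i, ⋃ j, f i '' {z | z ∈ unitDisk ∧ Dt β (Y i j) g z = 0}, g, Y, h, hM, ?_, ?_, ?_, hg,
    hY, ?_⟩
  · exact MeasureTheory.measure_union_null hN (null_iff_union fun i => null_iff_union fun j =>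
      null_zeros (h.hf i).diffOn (Dt_diff h.good _ _) (hD i j))
  · exact hB.trans Set.subset_union_left
  · intro i j α hα hn
    exact hc i j α hα fun hh => hn (Or.inl hh)
  · intro i j α hα hn e
    refine hn (Or.inr ?_)
    simp only [Set.mem_iUnion]
    exact ⟨i, j, α, ⟨hα, e⟩, rfl⟩

open Classical in
def SF (β : ℕ → ℝ) (T : Bool → H2 →L[ℂ] H2) (i j : Bool) (α : ℂ) : Finset ℂ :=
  if h : (SS β T i j α).Finite then h.toFinset else ∅

namespace Gdat

variable {β : ℕ → ℝ} {f : Bool → ℂ → ℂ} {T : Bool → H2 →L[ℂ] H2} {M : ℕ} {N : Set ℂ}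
    {g : Fin M → H2} {Y : Bool → Bool → Fin M → H2 →L[ℂ] H2}

theorem mem_SF (h : Gdat β f T M N g Y) {i j : Bool} {α : ℂ} (hα : α ∈ unitDisk) (hn : f i α ∉ N) {ζ : ℂ} :
    ζ ∈ SF β T i j α ↔ ζ ∈ SS β T i j α := by
  unfold SF
  rw [dif_pos (h.SS_finite hα (fun hh => hn (h.sub hh)))]
  simp

theorem card_SF (h : Gdat β f T M N g Y) {i j : Bool} {α : ℂ} (hα : α ∈ unitDisk) (hn : f i α ∉ N) :
    (SF β T i j α).card = M := by
  rw [← h.card i j α hα hn, ← Set.ncard_coe_finset]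
  congr 1
  ext ζ
  simp [h.mem_SF hα hn]

theorem le_of_gen (h : Gdat β f T M N g Y) (i : Bool) {u v : ℂ → ℝ} (hu : ContinuousOn u unitDisk)
    (hv : ContinuousOn v unitDisk) (hle : ∀ α ∈ unitDisk, f i α ∉ N → u α ≤ v α) {z : ℂ} (hz : z ∈ unitDisk) :
    u z ≤ v z := by
  by_contra hc
  have ho : IsOpen (unitDisk ∩ (fun z => v z - u z) ⁻¹' Set.Iio 0) :=
    (hv.sub hu).isOpen_inter_preimage unitDisk_open isOpen_Iio
  obtain ⟨α, hα, hn⟩ := dense_avoid (h.hf i).diffOn (h.hnc i) h.null ho Set.inter_subset_left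
    ⟨z, hz, by simpa using lt_of_not_ge hc⟩
  have h1 := hle α hα.1 hn
  have h2 : v α - u α < 0 := hα.2
  linarith

theorem eq_of_gen (h : Gdat β f T M N g Y) (i : Bool) {u v : ℂ → ℂ} (hu : ContinuousOn u unitDisk)
    (hv : ContinuousOn v unitDisk) (he : ∀ α ∈ unitDisk, f i α ∉ N → u α = v α) {z : ℂ} (hz : z ∈ unitDisk) :
    u z = v z := by
  have := h.le_of_gen i (u := fun z => ‖u z - v z‖) (v := fun _ => 0) (hu.sub hv).norm continuousOn_const
    (fun α hα hn => by simp [he α hα hn]) hz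
  exact sub_eq_zero.1 (norm_le_zero_iff.1 this)

theorem exists_F (h : Gdat β f T M N g Y) (i j : Bool) {c : ℂ} (hc : c ∈ unitDisk) :
    ∃ F : ℂ → ℂ, DifferentiableOn ℂ F unitDisk ∧ (∀ z ∈ unitDisk, ‖F z‖ ≤ 1) ∧
      ∀ α ∈ unitDisk, f i α ∉ N → F α = ∏ ζ ∈ SF β T i j α, mobius c ζ := by
  have hg' : ∀ b : Fin M, ∃ a, ∀ z ∈ unitDisk, repFun β a z = mobius c z * z ^ (b : ℕ) := by
    intro b
    refine exists_ofFun (aocd_iff.2 fun z hz => ?_) h.good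
    exact (aocd_iff.1 (mobius_analytic hc) z hz).mul (analyticAt_id.pow _)
  choose g' hg' using hg'
  have hprod : ∀ α ∈ unitDisk, f i α ∉ N →
      Dt β (Y i j) g' α = Dt β (Y i j) g α * ∏ ζ ∈ SF β T i j α, mobius c ζ := by
    intro α hα hn
    obtain ⟨Sf, hS, hrep⟩ := h.rep_points i j hα (fun hh => hn (h.sub hh))
    have hSS : Sf = SF β T i j α := by ext ζ; rw [hS, h.mem_SF hα hn]
    have hcard : Sf.card = M := by rw [hSS, h.card_SF hα hn]
    let e := Sf.equivFinOfCardEq hcard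
    choose C hC using fun a => hrep (Y i j a) (h.itw i j a)
    have hmem : ∀ k, ((e.symm k : Sf) : ℂ) ∈ unitDisk := fun k => ((hS _).1 (e.symm k).2).1
    have h1 : (Matrix.of fun a b => repFun β (Y i j a (g b)) α) =
        (Matrix.of fun a k => C a (e.symm k)) * (Matrix.of fun k (b : Fin M) => ((e.symm k : Sf) : ℂ) ^ (b : ℕ)) := by
      ext a b
      rw [Matrix.mul_apply, Matrix.of_apply, hC a, ← Finset.sum_coe_sort, ← e.symm.sum_comp]
      refine Finset.sum_congr rfl fun k _ => ?_
      rw [h.mono b _ (hmem k)]; rfl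
    have h2 : (Matrix.of fun a b => repFun β (Y i j a (g' b)) α) =
        (Matrix.of fun a k => C a (e.symm k)) * (Matrix.diagonal fun k => mobius c (e.symm k)) *
          (Matrix.of fun k (b : Fin M) => ((e.symm k : Sf) : ℂ) ^ (b : ℕ)) := by
      ext a b
      rw [Matrix.mul_apply, Matrix.of_apply, hC a, ← Finset.sum_coe_sort, ← e.symm.sum_comp]
      refine Finset.sum_congr rfl fun k _ => ?_
      rw [hg' b _ (hmem k), Matrix.mul_diagonal, Matrix.of_apply, Matrix.of_apply]; ring
    unfold Dt
    rw [h1, h2, Matrix.det_mul, Matrix.det_mul, Matrix.det_mul, Matrix.det_diagonal, ← hSS,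
      ← Finset.prod_coe_sort Sf, ← e.symm.prod_comp]
    ring
  obtain ⟨α0, hα0, hn0⟩ := dense_avoid (h.hf i).diffOn (h.hnc i) h.null unitDisk_open subset_rfl
      ⟨0, by simp [unitDisk]⟩
  obtain ⟨F, hF, hF1, hFq⟩ := exists_quotient (Dt_diff h.good (Y i j) g') (Dt_diff h.good (Y i j) g)
    (fun z hz => h.le_of_gen i (u := fun z => ‖Dt β (Y i j) g' z‖) (v := fun z => ‖Dt β (Y i j) g z‖)
      (Dt_diff h.good _ _).continuousOn.norm (Dt_diff h.good _ _).continuousOn.norm (fun α hα hn => by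
        rw [hprod α hα hn, norm_mul, norm_prod]
        refine mul_le_of_le_one_right (norm_nonneg _) (Finset.prod_le_one (fun _ _ => norm_nonneg _) ?_)
        intro ζ hζ
        exact (mobius_norm_lt hc ((h.mem_SF hα hn).1 hζ).1).le) hz) ⟨α0, hα0, h.dne i j α0 hα0 hn0⟩
  refine ⟨F, hF, hF1, fun α hα hn => ?_⟩
  rw [hFq α hα (h.dne i j α hα hn), hprod α hα hn, mul_div_cancel_left₀ _ (h.dne i j α hα hn)]

theorem exists_G (h : Gdat β f T M N g Y) (i j : Bool) {c : ℂ} (hc : c ∈ unitDisk) (hcn : f j c ∉ N) :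
    ∃ G : ℂ → ℂ, DifferentiableOn ℂ G unitDisk ∧ (∀ z ∈ unitDisk, ‖G z‖ ≤ 1) ∧
      ∀ α ∈ unitDisk, f i α ∉ N →
        ∏ ζ ∈ SF β T i j α, mobius c ζ = (∏ s ∈ SF β T j i c, mobius s α) * G α := by
  obtain ⟨F, hF, hF1, hFe⟩ := h.exists_F i j hc
  obtain ⟨G, hG, hG1, hGe⟩ := schwarz_prod (SF β T j i c) hF hF1
    (fun s hs => ((h.mem_SF hc hcn).1 hs).1) (fun s hs => by
      have hs := (h.mem_SF hc hcn).1 hs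
      have hsn : f i s ∉ N := by rwa [h.SS_f hc hs]
      rw [hFe s hs.1 hsn]
      refine Finset.prod_eq_zero ((h.mem_SF hs.1 hsn).2 (h.SS_symm h.sub h.card hc hcn hs)) (mobius_self c))
  exact ⟨G, hG, hG1, fun α hα hn => by rw [← hFe α hα hn, hGe α hα]⟩

theorem exists_B (h : Gdat β f T M N g Y) (i j : Bool) {c : ℂ} (hc : c ∈ unitDisk) (hcn : f j c ∉ N) :
    ∃ B : ℂ → ℂ, IsBlaschke M B ∧ ∀ α ∈ unitDisk, f i α ∉ N → B α = ∏ ζ ∈ SF β T i j α, mobius c ζ := by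
  obtain ⟨G, hG, hG1, hGe⟩ := h.exists_G i j hc hcn
  obtain ⟨α, hα, hn⟩ := dense_avoid (h.hf i).diffOn (h.hnc i)
    (MeasureTheory.measure_union_null h.null (MeasureTheory.measure_singleton (f j c))) unitDisk_open subset_rfl
      ⟨0, by simp [unitDisk]⟩
  rw [Set.mem_union, not_or] at hn
  obtain ⟨G', _, hG1', hGe'⟩ := h.exists_G j i hα hn.1
  have e1 := congrArg norm (hGe α hα hn.1)
  have e2 := congrArg norm (hGe' c hc hcn)
  rw [norm_mul, norm_prod, norm_prod] at e1 e2
  simp only [mobius_norm_comm α] at e2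
  simp only [mobius_norm_comm c] at e1
  have hpos : 0 < ∏ s ∈ SF β T j i c, ‖mobius s α‖ := by
    refine Finset.prod_pos fun s hs => norm_pos_iff.2 ?_
    have hs := (h.mem_SF hc hcn).1 hs
    rw [Ne, mobius_eq_zero hs.1 hα]
    rintro rfl
    exact hn.2 (h.SS_f hc hs)
  have hnn : 0 ≤ ∏ s ∈ SF β T i j α, ‖mobius s c‖ := Finset.prod_nonneg fun _ _ => norm_nonneg _
  have hG1a : 1 ≤ ‖G α‖ := by
    have h1 := hG1' c hc
    by_contra hlt
    rw [not_le] at hlt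
    nlinarith [mul_le_mul_of_nonneg_left h1 hnn, mul_lt_mul_of_pos_left hlt hpos]
  have hGa : ‖G α‖ = 1 := le_antisymm (hG1 α hα) hG1a
  have hconst := Complex.eqOn_of_isPreconnected_of_isMaxOn_norm isPreconnected_unitDisk unitDisk_open hG hα
    (fun z hz => by simpa [hGa] using hG1 z hz)
  let e := (SF β T j i c).equivFinOfCardEq (h.card_SF hc hcn)
  refine ⟨fun z => Complex.exp ((G α).arg * Complex.I) * ∏ k, mobius (e.symm k : SF β T j i c) z,
    ⟨(G α).arg, fun k => (e.symm k : SF β T j i c), fun k => ((h.mem_SF hc hcn).1 (e.symm k).2).1,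
      fun z => rfl⟩, fun z hz hzn => ?_⟩
  rw [hGe z hz hzn, hconst hz, Function.const_apply]
  have hk : Complex.exp ((G α).arg * Complex.I) = G α := by
    have := Complex.norm_mul_exp_arg_mul_I (G α)
    rwa [hGa, ofReal_one, one_mul] at this
  simp only [hk]
  rw [← Finset.prod_coe_sort (SF β T j i c), ← e.symm.prod_comp, mul_comm]

end Gdat
/-! ### The symbol `h` -/

theorem diff_param {a b c d : ℝ → ℂ} (ha : Continuous a) (hb : Continuous b) (hc : Continuous c)
    (hd : Continuous d) {ρ : ℝ} (hne : ∀ w : ℂ, ‖w‖ < ρ → ∀ t, c t - w * d t ≠ 0) (A B : ℝ) :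
    DifferentiableOn ℂ (fun w => ∫ t in A..B, (a t - w * b t) / (c t - w * d t)) (Metric.ball 0 ρ) := by
  intro w0 hw0
  obtain ⟨ε, hε, hsub⟩ := Metric.nhds_basis_closedBall.mem_iff.1 (Metric.isOpen_ball.mem_nhds hw0)
  have hne' : ∀ w ∈ Metric.closedBall w0 ε, ∀ t, c t - w * d t ≠ 0 := fun w hw t =>
    hne w (by simpa using hsub hw) t
  have hcF : ∀ w ∈ Metric.closedBall w0 ε, Continuous fun t => (a t - w * b t) / (c t - w * d t) :=
    fun w hw => Continuous.div (by fun_prop) (by fun_prop) (hne' w hw)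
  have hcF' : ContinuousOn (fun q : ℂ × ℝ => (-b q.2 * (c q.2 - q.1 * d q.2) - (a q.2 - q.1 * b q.2) * (-d q.2)) /
      (c q.2 - q.1 * d q.2) ^ 2) (Metric.closedBall w0 ε ×ˢ Set.uIcc A B) := by
    refine ContinuousOn.div (by fun_prop) (by fun_prop) ?_
    rintro ⟨w, t⟩ ⟨hw, _⟩
    exact pow_ne_zero 2 (hne' w hw t)
  obtain ⟨K, hK⟩ := ((isCompact_closedBall w0 ε).prod isCompact_uIcc).exists_bound_of_continuousOn hcF'
  have hmem : w0 ∈ Metric.closedBall w0 ε := Metric.mem_closedBall_self hε.le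
  have := intervalIntegral.hasDerivAt_integral_of_dominated_loc_of_deriv_le (μ := MeasureTheory.volume)
    (a := A) (b := B)
    (F := fun w t => (a t - w * b t) / (c t - w * d t))
    (F' := fun w t => (-b t * (c t - w * d t) - (a t - w * b t) * (-d t)) / (c t - w * d t) ^ 2)
    (x₀ := w0) (s := Metric.closedBall w0 ε) (bound := fun _ => K) (Metric.closedBall_mem_nhds w0 hε)
    (by
      filter_upwards [Metric.closedBall_mem_nhds w0 hε] with w hw
      exact (hcF w hw).aestronglyMeasurable)
    ((hcF w0 hmem).intervalIntegrable _ _)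
    (by
      refine Continuous.aestronglyMeasurable ?_
      exact Continuous.div (by fun_prop) (by fun_prop) (fun t => pow_ne_zero 2 (hne' w0 hmem t)))
    (Eventually.of_forall fun t ht w hw => hK (w, t) ⟨hw, Set.uIoc_subset_uIcc ht⟩)
    (by simp)
    (Eventually.of_forall fun t _ w hw => by
      have h1 : HasDerivAt (fun w => a t - w * b t) (-b t) w := by
        simpa using ((hasDerivAt_id w).mul_const (b t)).const_sub (a t)
      have h2 : HasDerivAt (fun w => c t - w * d t) (-d t) w := by
        simpa using ((hasDerivAt_id w).mul_const (d t)).const_sub (c t)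
      exact h1.div h2 (hne' w hw t))
  exact this.2.differentiableAt.differentiableWithinAt

open Polynomial in
theorem roots_of_card {p : ℂ[X]} {M : ℕ} (hp : p ≠ 0) (hd : p.natDegree ≤ M) {S : Finset ℂ} (hS : S.card = M)
    (hr : ∀ s ∈ S, p.eval s = 0) : p.roots = S.val := by
  symm
  refine Multiset.eq_of_le_of_card_le ?_ ?_
  · rw [Multiset.le_iff_subset S.nodup]
    intro s hs
    rw [mem_roots hp]
    exact hr s hs
  · exact (card_roots' p).trans (hd.trans hS.ge)

open Polynomial in
theorem exists_symbol {f B : ℂ → ℂ} {M : ℕ} (hf : AnalyticOnClosedDisk f) (hB : IsBlaschke M B) (hM : 0 < M) :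
    ∃ h, AnalyticOnClosedDisk h ∧ ∀ (w : ℂ) (S : Finset ℂ), ‖w‖ ≤ 1 → S.card = M →
      (∀ s ∈ S, s ∈ unitDisk ∧ B s = w) → (∀ s ∈ S, ∀ s' ∈ S, f s = f s') → ∀ s ∈ S, h w = f s := by
  obtain ⟨θ, zs, hzs, hBz⟩ := hB
  obtain ⟨R, hR, hA⟩ := hf.exists_radius
  obtain ⟨r, hr1, hrR, hrz⟩ : ∃ r : ℝ, 1 < r ∧ r < R ∧ ∀ j, ‖zs j‖ * r < 1 := by
    have h1 : ∀ᶠ r : ℝ in 𝓝[>] 1, r < R := (eventually_lt_nhds hR).filter_mono nhdsWithin_le_nhds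
    have h2 : ∀ᶠ r : ℝ in 𝓝[>] 1, ∀ j, ‖zs j‖ * r < 1 := by
      rw [eventually_all]
      intro j
      have : Tendsto (fun r : ℝ => ‖zs j‖ * r) (𝓝 1) (𝓝 (‖zs j‖ * 1)) := (continuous_const.mul continuous_id).tendsto 1
      exact (this.eventually_lt_const (by rw [mul_one]; exact mem_unitDisk.1 (hzs j))).filter_mono nhdsWithin_le_nhds
    obtain ⟨r, ⟨h1, h2⟩, h3⟩ := ((h1.and h2).and self_mem_nhdsWithin).exists
    exact ⟨r, h3, h1, h2⟩
  set P : ℂ[X] := C (Complex.exp (θ * Complex.I)) * ∏ j, (C (zs j) - X) with hP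
  set Q : ℂ[X] := ∏ j, (1 - C ((starRingEnd ℂ) (zs j)) * X) with hQ
  have hPe : ∀ x, P.eval x = Complex.exp (θ * Complex.I) * ∏ j, (zs j - x) := fun x => by
    simp [hP, eval_prod]
  have hQe : ∀ x, Q.eval x = ∏ j, (1 - (starRingEnd ℂ) (zs j) * x) := fun x => by
    simp [hQ, eval_prod]
  have hden : ∀ x : ℂ, ‖x‖ ≤ r → ∀ j, 1 - (starRingEnd ℂ) (zs j) * x ≠ 0 := fun x hx j =>
    mobius_den_ne (lt_of_le_of_lt (mul_le_mul_of_nonneg_left hx (norm_nonneg _)) (hrz j))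
  have hQ0 : ∀ x : ℂ, ‖x‖ ≤ r → Q.eval x ≠ 0 := fun x hx => by
    rw [hQe]; exact Finset.prod_ne_zero_iff.2 fun j _ => hden x hx j
  have hBPQ : ∀ x, B x = P.eval x / Q.eval x := fun x => by
    rw [hBz, hPe, hQe, mul_div_assoc, ← Finset.prod_div_distrib]; rfl
  have hB1 : ∀ x : ℂ, ‖x‖ = r → 1 < ‖P.eval x / Q.eval x‖ := by
    intro x hx
    rw [← hBPQ, hBz, norm_mul, Complex.norm_exp_ofReal_mul_I, one_mul, norm_prod]
    have : Nonempty (Fin M) := ⟨⟨0, hM⟩⟩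
    calc (1:ℝ) = ∏ j : Fin M, 1 := by simp
      _ < _ := Finset.prod_lt_prod_of_nonempty (fun _ _ => one_pos)
        (fun j _ => mobius_norm_gt (hzs j) (by rw [hx]; exact hr1) (hden x hx.le j)) Finset.univ_nonempty
  obtain ⟨x0, hx0, hmin⟩ := (isCompact_sphere (0:ℂ) r).exists_isMinOn
    (NormedSpace.sphere_nonempty.2 (by linarith))
    (f := fun x => ‖P.eval x / Q.eval x‖)
    (ContinuousOn.norm (ContinuousOn.div (by fun_prop) (by fun_prop)
      (fun x hx => hQ0 x (by simpa using (le_of_eq (mem_sphere_zero_iff_norm.1 hx))))))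
  set ρ := ‖P.eval x0 / Q.eval x0‖ with hρ
  have hρ1 : 1 < ρ := hB1 x0 (by simpa using hx0)
  have hne : ∀ w : ℂ, ‖w‖ < ρ → ∀ x : ℂ, ‖x‖ = r → P.eval x - w * Q.eval x ≠ 0 := by
    intro w hw x hx h0
    have h1 : P.eval x / Q.eval x = w := by
      rw [div_eq_iff (hQ0 x hx.le)]; exact sub_eq_zero.1 h0
    have h2 : ρ ≤ ‖P.eval x / Q.eval x‖ := hmin (by simpa using hx)
    rw [h1] at h2
    linarith
  have hr0 : 0 < r := by linarith
  have hγ : ∀ t, ‖circleMap 0 r t‖ = r := fun t => by simp [abs_of_pos hr0]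
  have hγc : Continuous (circleMap 0 r) := continuous_circleMap 0 r
  have hfγ : Continuous fun t => f (circleMap 0 r t) :=
    hA.continuousOn.comp_continuous hγc fun t => by simp only [mem_closedBall_zero_iff, hγ]; exact hrR.le
  have hdγ : Continuous (deriv (circleMap 0 r)) := by
    have : deriv (circleMap 0 r) = fun t => circleMap 0 r t * I := by
      ext t; simp [deriv_circleMap]
    rw [this]; fun_prop
  have hPc : ∀ p : ℂ[X], Continuous fun t => p.eval (circleMap 0 r t) := fun p => p.continuous.comp hγc
  refine ⟨fun w => (2 * Real.pi * I * M)⁻¹ * ∫ t in (0:ℝ)..2 * Real.pi,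
      (deriv (circleMap 0 r) t * f (circleMap 0 r t) * P.derivative.eval (circleMap 0 r t) -
        w * (deriv (circleMap 0 r) t * f (circleMap 0 r t) * Q.derivative.eval (circleMap 0 r t))) /
      (P.eval (circleMap 0 r t) - w * Q.eval (circleMap 0 r t)),
    analyticOnClosedDisk_of_diff hρ1 (DifferentiableOn.const_mul (diff_param
      ((hdγ.mul hfγ).mul (hPc _)) ((hdγ.mul hfγ).mul (hPc _)) (hPc _) (hPc _)
      (fun w hw t => hne w hw _ (hγ t)) _ _) _), ?_⟩
  intro w S hw hS hSB hSf s0 hs0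
  set p : ℂ[X] := P - C w * Q with hp
  have hpe : ∀ x, p.eval x = P.eval x - w * Q.eval x := fun x => by simp [hp]
  have hpr : ∀ x : ℂ, ‖x‖ = r → p.eval x ≠ 0 := fun x hx => by
    rw [hpe]; exact hne w (by linarith) x hx
  have hp0 : p ≠ 0 := by
    intro h0
    apply hpr (r : ℂ) (by simp [abs_of_pos hr0])
    rw [h0, eval_zero]
  have hdeg : p.natDegree ≤ M := by
    refine (natDegree_sub_le _ _).trans (max_le ?_ ?_)
    · refine (natDegree_C_mul_le _ _).trans ((natDegree_prod_le _ _).trans ?_)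
      refine (Finset.sum_le_card_nsmul _ _ 1 fun j _ => ?_).trans (by simp)
      exact (natDegree_sub_le _ _).trans (by simp)
    · refine (natDegree_C_mul_le _ _).trans ((natDegree_prod_le _ _).trans ?_)
      refine (Finset.sum_le_card_nsmul _ _ 1 fun j _ => ?_).trans (by simp)
      refine (natDegree_sub_le _ _).trans (max_le (by simp) ?_)
      exact (natDegree_C_mul_le _ _).trans (by simp)
  have hroots := roots_of_card hp0 hdeg hS (fun s hs => by
    have h1 := (hSB s hs).2
    have hs1 := mem_unitDisk.1 (hSB s hs).1
    rw [hBPQ, div_eq_iff (hQ0 s (by linarith))] at h1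
    rw [hpe, h1, sub_self])
  have hint : (∫ t in (0:ℝ)..2 * Real.pi,
      (deriv (circleMap 0 r) t * f (circleMap 0 r t) * P.derivative.eval (circleMap 0 r t) -
        w * (deriv (circleMap 0 r) t * f (circleMap 0 r t) * Q.derivative.eval (circleMap 0 r t))) /
      (P.eval (circleMap 0 r t) - w * Q.eval (circleMap 0 r t))) =
      ∑ s ∈ S, ∮ x in C(0, r), (x - s)⁻¹ • f x := by
    have hci : ∀ s ∈ S, CircleIntegrable (fun x => (x - s)⁻¹ • f x) 0 r := by
      intro s hs
      apply ContinuousOn.circleIntegrable hr0.le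
      refine ContinuousOn.smul (f := fun x : ℂ => (x - s)⁻¹)
        (ContinuousOn.inv₀ (f := fun x : ℂ => x - s) (by fun_prop) ?_)
        (hA.continuousOn.mono fun x hx => by
          rw [mem_sphere_zero_iff_norm] at hx
          rw [mem_closedBall_zero_iff]; linarith)
      intro x hx h0
      rw [mem_sphere_zero_iff_norm] at hx
      rw [sub_eq_zero.1 h0] at hx
      have := mem_unitDisk.1 (hSB s hs).1
      linarith
    rw [← circleIntegral.integral_fun_sum hci]
    unfold circleIntegral
    refine intervalIntegral.integral_congr fun t _ => ?_
    have hx := hγ t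
    generalize hxe : circleMap 0 r t = x at hx
    have h1 := (IsAlgClosed.splits p).eval_derivative_div_eval_of_ne_zero (hpr x hx)
    rw [hroots] at h1
    have h2 : ∑ s ∈ S, (x - s)⁻¹ • f x = (p.derivative.eval x / p.eval x) * f x := by
      rw [h1, ← Finset.sum_smul, smul_eq_mul]
      congr 1
      simp only [one_div]
      rfl
    simp only [hxe]
    rw [h2, hpe, smul_eq_mul]
    have h3 : p.derivative.eval x = P.derivative.eval x - w * Q.derivative.eval x := by
      simp [hp]
    rw [h3]
    ring
  simp only [hint]
  have hcau : ∀ s ∈ S, (∮ x in C(0, r), (x - s)⁻¹ • f x) = (2 * Real.pi * I) * f s0 := by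
    intro s hs
    have hs1 := mem_unitDisk.1 (hSB s hs).1
    rw [DiffContOnCl.circleIntegral_sub_inv_smul (R := r) (c := 0) (w := s) (f := f)
      (hA.differentiableOn.diffContOnCl_ball (Metric.closedBall_subset_closedBall hrR.le))
      (by rw [mem_ball_zero_iff]; linarith), hSf s hs s0 hs0, smul_eq_mul]
  rw [Finset.sum_congr rfl hcau, Finset.sum_const, hS, nsmul_eq_mul]
  have hM0 : (M : ℂ) ≠ 0 := by exact_mod_cast hM.ne'
  have hpi : (Real.pi : ℂ) ≠ 0 := by exact_mod_cast Real.pi_ne_zero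
  field_simp
/-! ### Assembly -/

theorem blaschke_cont {m : ℕ} {B : ℂ → ℂ} (hB : IsBlaschke m B) : ContinuousOn B unitDisk := by
  obtain ⟨θ, zs, hzs, hBf⟩ := hB
  rw [funext hBf]
  exact continuousOn_const.mul (continuousOn_finset_prod _ fun j _ => (mobius_diff_disk (hzs j)).continuousOn)

theorem aocd_comp_cont {m : ℕ} {B h : ℂ → ℂ} (hB : IsBlaschke m B) (hh : AnalyticOnClosedDisk h) :
    ContinuousOn (fun z => h (B z)) unitDisk := by
  have hc : ContinuousOn h (Metric.closedBall 0 1) := fun z hz => (aocd_iff.1 hh z hz).continuousAt.continuousWithinAt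
  exact hc.comp (blaschke_cont hB) fun z hz => by simpa using blaschke_le_one hB hz

theorem necessity {β : ℕ → ℝ} {f : Bool → ℂ → ℂ} {T : Bool → H2 →L[ℂ] H2} (hs : Sys β f T) :
    ∃ (m : ℕ) (B₁ B₂ h : ℂ → ℂ), 0 < m ∧ IsBlaschke m B₁ ∧ IsBlaschke m B₂ ∧
        AnalyticOnClosedDisk h ∧
        (∀ z ∈ unitDisk, f true z = h (B₁ z)) ∧ (∀ z ∈ unitDisk, f false z = h (B₂ z)) := by
  obtain ⟨M, N, g, Y, h⟩ := hs.exists_gdat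
  obtain ⟨c, hc, hcn⟩ := dense_avoid (h.hf true).diffOn (h.hnc true) h.null unitDisk_open subset_rfl
      ⟨0, by simp [unitDisk]⟩
  obtain ⟨B₁, hB₁, hB₁e⟩ := h.exists_B true true hc hcn
  obtain ⟨B₂, hB₂, hB₂e⟩ := h.exists_B false true hc hcn
  obtain ⟨φ, hφ, hφe⟩ := exists_symbol (h.hf true) hB₁ h.mpos
  have hSF : ∀ {i : Bool} {α s : ℂ}, α ∈ unitDisk → f i α ∉ N → s ∈ SS β T i true α →
      SF β T true true s = SF β T i true α := by
    intro i α s hα hn hs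
    have e := h.SS_f hα hs
    ext x
    rw [h.mem_SF hs.1 (by rwa [e]), h.mem_SF hα hn, h.SS_eq h.sub h.card true hα hn hs]
  have h1 : ∀ α ∈ unitDisk, f true α ∉ N → φ (B₁ α) = f true α := by
    intro α hα hn
    have hf : ∀ s ∈ SF β T true true α, s ∈ SS β T true true α ∧ f true s = f true α := fun s hs =>
      ⟨(h.mem_SF hα hn).1 hs, h.SS_f hα ((h.mem_SF hα hn).1 hs)⟩
    refine hφe (B₁ α) (SF β T true true α) (blaschke_le_one hB₁ hα) (h.card_SF hα hn) (fun s hs => ?_)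
      (fun s hs s' hs' => by rw [(hf s hs).2, (hf s' hs').2]) α ((h.mem_SF hα hn).2 (Sys.SS_self true hα))
    refine ⟨(hf s hs).1.1, ?_⟩
    rw [hB₁e s (hf s hs).1.1 (by rw [(hf s hs).2]; exact hn), hB₁e α hα hn, hSF hα hn (hf s hs).1]
  have h2 : ∀ α ∈ unitDisk, f false α ∉ N → φ (B₂ α) = f false α := by
    intro α hα hn
    obtain ⟨ζ, hζ⟩ := h.SS_nonempty false true hα (fun hh => hn (h.sub hh))
    have e := h.SS_f hα hζ
    have hζn : f true ζ ∉ N := by rwa [e]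
    rw [← e, ← h1 ζ hζ.1 hζn, hB₂e α hα hn, hB₁e ζ hζ.1 hζn, hSF hα hn hζ]
  exact ⟨M, B₁, B₂, φ, h.mpos, hB₁, hB₂, hφ,
    fun z hz => h.eq_of_gen true (h.hf true).diffOn.continuousOn (aocd_comp_cont hB₁ hφ)
      (fun α hα hn => (h1 α hα hn).symm) hz,
    fun z hz => h.eq_of_gen false (h.hf false).diffOn.continuousOn (aocd_comp_cont hB₂ hφ)
      (fun α hα hn => (h2 α hα hn).symm) hz⟩

theorem const_transfer {β : ℕ → ℝ} (hβ : Good β) {f₁ f₂ : ℂ → ℂ} {T₁ T₂ : H2 →L[ℂ] H2}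
    (hT₁ : RepMul β f₁ T₁) (hT₂ : RepMul β f₂ T₂) (X : H2 ≃L[ℂ] H2) (hX : ∀ a, X (T₁ a) = T₂ (X a))
    {c : ℂ} (hc : ∀ z ∈ unitDisk, f₁ z = c) : ∀ z ∈ unitDisk, f₂ z = c := by
  intro z hz
  obtain ⟨e, he⟩ := exists_ofFun (aocd_poly 1) hβ
  simp only [Polynomial.eval_one] at he
  have h1 : T₁ (X.symm e) = c • X.symm e := by
    apply repFun_inj hβ
    intro x hx
    rw [hT₁ _ x hx, repFun_smul hβ hx, hc x hx]
  have h2 := hX (X.symm e)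
  rw [h1, map_smul, X.apply_symm_apply] at h2
  have h3 := congrArg (fun v => repFun β v z) h2
  simp only [repFun_smul hβ hz, hT₂ _ z hz, he z hz, mul_one] at h3
  exact h3.symm

/-- Let `H²_β` be of polynomial growth and `f₁, f₂` analytic on a
neighbourhood of the closed disk.  Then `M_{f₁} ∼ M_{f₂}` on `H²_β` iff there are
finite Blaschke products `B₁, B₂` of the same order and an `h` analytic on a
neighbourhood of the closed disk with `f₁ = h ∘ B₁` and `f₂ = h ∘ B₂`. -/
theorem statement19 (w : ℕ → ℝ) (hw : PolyGrowth w) (f₁ f₂ : ℂ → ℂ)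
    (hf₁ : AnalyticOnClosedDisk f₁) (hf₂ : AnalyticOnClosedDisk f₂)
    (T₁ T₂ : H2 →L[ℂ] H2)
    (hT₁ : RepMul (betaSeq w) f₁ T₁) (hT₂ : RepMul (betaSeq w) f₂ T₂) :
    (∃ X : H2 ≃L[ℂ] H2, ∀ a : H2, X (T₁ a) = T₂ (X a)) ↔
      ∃ (m : ℕ) (B₁ B₂ h : ℂ → ℂ), 0 < m ∧ IsBlaschke m B₁ ∧ IsBlaschke m B₂ ∧
        AnalyticOnClosedDisk h ∧
        (∀ z ∈ unitDisk, f₁ z = h (B₁ z)) ∧ (∀ z ∈ unitDisk, f₂ z = h (B₂ z)) := by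
  have hβ := good_betaSeq hw
  constructor
  · rintro ⟨X, hX⟩
    have hX' : ∀ a, X.symm (T₂ a) = T₁ (X.symm a) := by
      intro a
      rw [ContinuousLinearEquiv.symm_apply_eq, hX, X.apply_symm_apply]
    by_cases hc : ∃ c, ∀ z ∈ unitDisk, f₁ z = c
    · obtain ⟨c, hc⟩ := hc
      have hc2 := const_transfer hβ hT₁ hT₂ X hX hc
      have hB : IsBlaschke 1 (fun z => Complex.exp ((0:ℝ) * Complex.I) * ∏ j : Fin 1, mobius 0 z) :=
        ⟨0, fun _ => 0, fun _ => by simp [unitDisk], fun z => rfl⟩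
      exact ⟨1, _, _, fun _ => c, one_pos, hB, hB, aocd_iff.2 fun z _ => analyticAt_const, hc, hc2⟩
    · have hc2 : ¬ ∃ c, ∀ z ∈ unitDisk, f₂ z = c := fun ⟨c, h⟩ =>
        hc ⟨c, const_transfer hβ hT₂ hT₁ X.symm hX' h⟩
      have hsys : Sys (betaSeq w) (fun i => bif i then f₁ else f₂) (fun i => bif i then T₁ else T₂) := by
        refine ⟨hβ, ?_, ?_, ?_, ?_⟩
        · rintro (_ | _)
          exacts [hf₂, hf₁]
        · rintro (_ | _)
          exacts [hT₂, hT₁]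
        · rintro (_ | _)
          exacts [hc2, hc]
        · rintro (_ | _) (_ | _)
          exacts [⟨ContinuousLinearEquiv.refl ℂ H2, fun _ => rfl⟩, ⟨X, hX⟩, ⟨X.symm, hX'⟩,
            ⟨ContinuousLinearEquiv.refl ℂ H2, fun _ => rfl⟩]
      exact necessity hsys
  · rintro ⟨m, B₁, B₂, h, hm, hB₁, hB₂, hh, e₁, e₂⟩
    exact sufficiency hβ (slow_betaSeq hw) hT₁ hT₂ hm hB₁ hB₂ hh e₁ e₂
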